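/- For 1/4 < q < 1/2, the function F(z) = (1 − z)^{−2q} satisfies ∫_𝔻 |F(z)| (1 − Re z)^{−5/4} dA(z) = ∞, and consequently F ∉ H^1_{u₀}(𝔻), even though F ∈ H^1(𝔻); in particular H^1_{u₀}(𝔻) ⊊ H^1(𝔻). -/

import Mathlib

open MeasureTheory Filter Metric Complex Set
open scoped Real ENNReal Topology

noncomputable section

/-- The Laplacian of a real-valued function on `ℂ ≅ ℝ²`. -/
def lap (φ : ℂ → ℝ) (z : ℂ) : ℝ :=
  fderiv ℝ (fun w => fderiv ℝ φ w 1) z 1 +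
    fderiv ℝ (fun w => fderiv ℝ φ w Complex.I) z Complex.I

/-- `h` is harmonic on `s`. -/
def HarmonicOn (h : ℂ → ℝ) (s : Set ℂ) : Prop :=
  ContDiffOn ℝ 2 h s ∧ ∀ z ∈ s, lap h z = 0

/-- `u` is subharmonic on `s` (continuous with the sub-mean-value property). -/
def SubharmonicOn (u : ℂ → ℝ) (s : Set ℂ) : Prop :=
  ContinuousOn u s ∧ ∀ z ∈ s, ∀ r : ℝ, 0 < r → closedBall z r ⊆ s →
    u z ≤ (2 * Real.pi)⁻¹ *
      ∫ t in (0:ℝ)..(2 * Real.pi), u (z + (r : ℂ) * Complex.exp ((t : ℂ) * Complex.I))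

/-- `u` is a negative continuous subharmonic exhaustion function for `Ω`:
sublevel sets `{u < c}`, `c < 0`, are relatively compact in `Ω`. -/
structure IsExhaustion (u : ℂ → ℝ) (Ω : Set ℂ) : Prop where
  neg : ∀ z ∈ Ω, u z < 0
  subh : SubharmonicOn u Ω
  exh : ∀ c : ℝ, c < 0 → IsCompact (closure {z | z ∈ Ω ∧ u z < c}) ∧
    closure {z | z ∈ Ω ∧ u z < c} ⊆ Ω

/-- `ν` is the Riesz measure `dd^c u = (1/4) Δu dA` of `u` on `Ω`, characterized
distributionally: `∫ φ dν = (1/4) ∫_Ω u Δφ dA` for test functions `φ`. -/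
def IsRieszMeasure (u : ℂ → ℝ) (Ω : Set ℂ) (ν : Measure ℂ) : Prop :=
  ν Ωᶜ = 0 ∧
  ∀ φ : ℂ → ℝ, ContDiff ℝ 2 φ → HasCompactSupport φ → tsupport φ ⊆ Ω →
    ∫ z, φ z ∂ν = (4 : ℝ)⁻¹ * ∫ z in Ω, u z * lap φ z

/-- `μ` is the Monge–Ampère measure `μ_{u,r} = dd^c max(u,r) - χ_{Ω∖{u<r}} dd^c u`,
where `ν = dd^c u`. -/
def IsMAMeasure (u : ℂ → ℝ) (Ω : Set ℂ) (ν : Measure ℂ) (r : ℝ) (μ : Measure ℂ) : Prop :=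
  ∃ νr : Measure ℂ, IsRieszMeasure (fun z => max (u z) r) Ω νr ∧
    μ = νr - ν.restrict {z | z ∈ Ω ∧ r ≤ u z}

/-- The `p`-th power of the Poletsky–Stessin Hardy "norm",
`limsup_{r→0⁻} ∫ |f|^p dμ_{u,r}`. -/
def psNormPow (p : ℝ) (μfam : ℝ → Measure ℂ) (f : ℂ → ℂ) : ℝ≥0∞ :=
  Filter.limsup (fun r => ∫⁻ z, ENNReal.ofReal (‖f z‖ ^ p) ∂(μfam r))
    (nhdsWithin 0 (Set.Iio 0))

/-- The Poletsky–Stessin Hardy norm. -/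
def psNorm (p : ℝ) (μfam : ℝ → Measure ℂ) (f : ℂ → ℂ) : ℝ≥0∞ :=
  psNormPow p μfam f ^ (1 / p)

/-- Membership in the Poletsky–Stessin Hardy space `H^p_u(Ω)`, where `μfam r = μ_{u,r}`. -/
def MemPS (p : ℝ) (Ω : Set ℂ) (μfam : ℝ → Measure ℂ) (f : ℂ → ℂ) : Prop :=
  DifferentiableOn ℂ f Ω ∧ psNormPow p μfam f < ⊤

/-- Membership in the classical Hardy space `H^p(Ω)`: `|f|^p` has a harmonic majorant. -/
def MemHClassical (p : ℝ) (Ω : Set ℂ) (f : ℂ → ℂ) : Prop :=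
  DifferentiableOn ℂ f Ω ∧
    ∃ h : ℂ → ℝ, HarmonicOn h Ω ∧ ∀ z ∈ Ω, ‖f z‖ ^ p ≤ h z

/-- A bounded domain in `ℂ` containing `0` whose boundary is an analytic Jordan curve:
there is a conformal map of the unit disc onto `Ω` extending analytically and injectively
across the closed disc, carrying the unit circle onto the boundary of `Ω`. -/
structure AnalyticJordanDomain (Ω : Set ℂ) : Prop where
  isOpen : IsOpen Ω
  isConnected : IsConnected Ω
  isBounded : Bornology.IsBounded Ω
  zero_mem : (0:ℂ) ∈ Ω
  analyticBoundary : ∃ (U : Set ℂ) (ψ : ℂ → ℂ), IsOpen U ∧ closedBall (0:ℂ) 1 ⊆ U ∧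
    DifferentiableOn ℂ ψ U ∧ Set.InjOn ψ U ∧ ψ '' ball (0:ℂ) 1 = Ω ∧
    ψ '' sphere (0:ℂ) 1 = frontier Ω

/-- `μ` is the boundary Monge–Ampère measure: the weak* limit of the measures
`μfam r = μ_{u,r}` as `r → 0⁻`. -/
def IsBoundaryMA (μfam : ℝ → Measure ℂ) (μ : Measure ℂ) : Prop :=
  ∀ φ : ℂ → ℝ, Continuous φ →
    Filter.Tendsto (fun r => ∫ z, φ z ∂(μfam r)) (nhdsWithin 0 (Set.Iio 0))
      (nhds (∫ z, φ z ∂μ))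

/-- `f` has nontangential limit `L` at the boundary point `ξ` of `Ω`. -/
def NTLim (Ω : Set ℂ) (f : ℂ → ℂ) (ξ : ℂ) (L : ℂ) : Prop :=
  ∀ C : ℝ, 1 < C →
    Filter.Tendsto f
      (nhdsWithin ξ {z | z ∈ Ω ∧ dist z ξ ≤ C * infDist z (frontier Ω)}) (nhds L)

/-- Arc length measure on the boundary of `Ω` (1-dimensional Hausdorff measure). -/
def arcLen (Ω : Set ℂ) : Measure ℂ := (μH[1] : Measure ℂ).restrict (frontier Ω)


/-- The classical Hardy space `H^1(𝔻)`: holomorphic on the unit disc with uniformly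
bounded integral means `∫_0^{2π} |f(r e^{iθ})| dθ`, `0 < r < 1`. -/
def MemH1Disc (f : ℂ → ℂ) : Prop :=
  DifferentiableOn ℂ f (ball (0:ℂ) 1) ∧
    ∃ M : ℝ, ∀ r : ℝ, 0 < r → r < 1 →
      (∫ θ in (0:ℝ)..(2 * Real.pi),
        ‖f ((r : ℂ) * Complex.exp ((θ : ℂ) * Complex.I))‖) ≤ M


lemma le_sub_add_meas {m1 m2 : Measure ℂ} [IsFiniteMeasure m1] [IsFiniteMeasure m2] :
    m1 ≤ (m1 - m2) + m2 := by
  obtain ⟨s, hs, h1, h2⟩ := hahn_decomposition m1 m2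
  have e : (m1 - m2).restrict s + m2.restrict s = m1.restrict s := by
    rw [Measure.restrict_sub_eq_restrict_sub_restrict hs]
    apply Measure.sub_add_cancel_of_le
    rw [Measure.le_iff]
    intro t ht
    rw [Measure.restrict_apply ht, Measure.restrict_apply ht]
    exact h1 _ (ht.inter hs) inter_subset_right
  rw [Measure.le_iff]
  intro t ht
  rw [← measure_inter_add_sdiff t hs, ← measure_inter_add_sdiff (μ := m1 - m2 + m2) t hs]
  gcongr ?_ + ?_
  · have := congrArg (fun m => m t) e
    simp only [Measure.add_apply, Measure.restrict_apply ht] at this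
    rw [← this]; simp
  · refine (h2 _ (ht.diff hs) ?_).trans ?_
    · intro x hx; exact hx.2
    · simp

lemma normF (q : ℝ) (z : ℂ) : ‖(1 - z) ^ (-2 * (q:ℂ))‖ = ‖1 - z‖ ^ (-2 * q) := by
  have : (-2 * (q:ℂ)) = ((-2 * q : ℝ) : ℂ) := by push_cast; ring
  rw [this, norm_cpow_real]

lemma part1 (q : ℝ) (hq0 : 1/4 < q) (hq1 : q < 1/2) :
    (∫⁻ z in ball (0:ℂ) 1,
        ENNReal.ofReal (‖(1 - z) ^ (-2 * (q:ℂ))‖ * (1 - z.re) ^ (-(5:ℝ)/4)) = ⊤) := by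
  set G : ℝ × ℝ → ℝ≥0∞ := fun p => (Ioo (0:ℝ) 1 ×ˢ univ ∩ {p : ℝ × ℝ | p.2 ∈ Ioo 0 (√(1 - p.1))}).indicator
    (fun p => ENNReal.ofReal (2 ^ (-q) * (1 - p.1) ^ (-q - 5/4))) p with hG
  have hS : MeasurableSet (Ioo (0:ℝ) 1 ×ˢ univ ∩ {p : ℝ × ℝ | p.2 ∈ Ioo 0 (√(1 - p.1))}) := by
    apply (measurableSet_Ioo.prod MeasurableSet.univ).inter
    have : {p : ℝ × ℝ | p.2 ∈ Ioo 0 (√(1 - p.1))} = {p : ℝ × ℝ | 0 < p.2} ∩ {p | p.2 < √(1 - p.1)} := by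
      ext; simp
    rw [this]
    exact (measurableSet_lt (by fun_prop) (by fun_prop)).inter (measurableSet_lt (by fun_prop) (by fun_prop))
  have hGm : Measurable G := by
    apply Measurable.indicator _ hS
    fun_prop
  have key : ∫⁻ p, G p = ⊤ := by
    rw [Measure.volume_eq_prod, lintegral_prod _ hGm.aemeasurable]
    have h1 : ∀ x : ℝ, ∫⁻ y, G (x, y) = (Ioo (0:ℝ) 1).indicator (fun x => ENNReal.ofReal (2 ^ (-q) * (1 - x) ^ (-q - 3/4))) x := by
      intro x
      by_cases hx : x ∈ Ioo (0:ℝ) 1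
      · rw [indicator_of_mem hx]
        have : ∀ y, G (x, y) = (Ioo 0 (√(1 - x))).indicator (fun _ => ENNReal.ofReal (2 ^ (-q) * (1 - x) ^ (-q - 5/4))) y := by
          intro y
          simp only [hG, indicator, mem_inter_iff, mem_prod, hx, mem_univ, true_and, and_true, mem_ofPred_eq]
        simp_rw [this]
        rw [lintegral_indicator measurableSet_Ioo, setLIntegral_const, Real.volume_Ioo,
          ← ENNReal.ofReal_mul]
        · congr 1
          have h1x : 0 < 1 - x := by linarith [hx.2]
          rw [sub_zero, Real.sqrt_eq_rpow, mul_assoc, ← Real.rpow_add h1x]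
          congr 2; ring
        · have h1x : 0 < 1 - x := by linarith [hx.2]
          positivity
      · rw [indicator_of_notMem hx]
        have : ∀ y, G (x, y) = 0 := by
          intro y
          apply indicator_of_notMem
          rintro ⟨⟨h, -⟩, -⟩
          exact hx h
        simp [this]
    simp_rw [h1]
    rw [lintegral_indicator measurableSet_Ioo]
    by_contra hne
    have hi : IntegrableOn (fun x : ℝ => 2 ^ (-q) * (1 - x) ^ (-q - 3/4)) (Ioo 0 1) := by
      refine ⟨Measurable.aestronglyMeasurable (by fun_prop), ?_⟩
      rw [hasFiniteIntegral_iff_ofReal]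
      · exact lt_top_iff_ne_top.2 hne
      · filter_upwards [ae_restrict_mem measurableSet_Ioo] with x hx
        have h1x : 0 < 1 - x := by linarith [hx.2]
        simp only [Pi.zero_apply]
        positivity
    have hi2 : IntervalIntegrable (fun x : ℝ => 2 ^ (-q) * (1 - x) ^ (-q - 3/4)) volume 0 1 := by
      rw [intervalIntegrable_iff_integrableOn_Ioo_of_le zero_le_one]; exact hi
    have hi3 := hi2.comp_sub_left 1
    simp only [sub_sub_cancel, sub_zero, sub_self] at hi3
    have hi4 := (hi3.symm.const_mul ((2:ℝ) ^ q))
    have : (fun x : ℝ => (2:ℝ) ^ q * (2 ^ (-q) * x ^ (-q - 3/4))) = fun x => x ^ (-q - 3/4) := by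
      ext x
      rw [← mul_assoc, ← Real.rpow_add (by norm_num)]; simp
    rw [this, intervalIntegrable_iff_integrableOn_Ioo_of_le zero_le_one,
      intervalIntegral.integrableOn_Ioo_rpow_iff zero_lt_one] at hi4
    linarith
  rw [← top_le_iff, ← key, ← (Complex.volume_preserving_equiv_real_prod).lintegral_comp hGm,
    ← lintegral_indicator measurableSet_ball]
  apply lintegral_mono
  intro z
  simp only [Complex.measurableEquivRealProd_apply, hG]
  by_cases hz : (z.re, z.im) ∈ (Ioo (0:ℝ) 1 ×ˢ univ ∩ {p : ℝ × ℝ | p.2 ∈ Ioo 0 (√(1 - p.1))})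
  · rw [indicator_of_mem hz]
    obtain ⟨⟨⟨h1, h2⟩, -⟩, h3, h4⟩ := hz
    simp only at h1 h2 h3 h4
    have h5 : z.im ^ 2 < 1 - z.re := by
      have := Real.lt_sqrt (y := 1 - z.re) h3.le
      exact this.1 h4
    have hb : z ∈ ball (0:ℂ) 1 := by
      rw [mem_ball_zero_iff]
      have : ‖z‖ ^ 2 < 1 := by
        rw [Complex.sq_norm, Complex.normSq_apply]; nlinarith
      nlinarith [norm_nonneg z]
    rw [indicator_of_mem hb]
    apply ENNReal.ofReal_le_ofReal
    have hs : 0 < 1 - z.re := by linarith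
    rw [normF, sub_eq_add_neg (-q), neg_div]
    simp only []
    rw [Real.rpow_add hs, ← mul_assoc]
    apply mul_le_mul_of_nonneg_right _ (by positivity)
    rw [← Real.mul_rpow (by norm_num) hs.le]
    have hn : ‖1 - z‖ ^ 2 ≤ 2 * (1 - z.re) := by
      rw [Complex.sq_norm, Complex.normSq_apply]
      simp only [sub_re, one_re, sub_im, one_im]
      nlinarith
    have hp : 0 < ‖1 - z‖ := by
      rw [norm_pos_iff]
      intro h
      have := congrArg Complex.re h
      simp at this; linarith
    have : ‖1 - z‖ ^ (-2 * q) = (‖1 - z‖ ^ 2) ^ (-q) := by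
      rw [← Real.rpow_natCast, ← Real.rpow_mul hp.le]; norm_num
    rw [this]
    exact Real.rpow_le_rpow_of_nonpos (by positivity) hn (by linarith)
  · rw [indicator_of_notMem hz]; exact zero_le

lemma one_sub_mem_slit {z : ℂ} (hz : z ∈ ball (0:ℂ) 1) : 1 - z ∈ slitPlane := by
  left
  rw [mem_ball_zero_iff] at hz
  have := Complex.re_le_norm z
  simp; linarith

lemma part2 (q : ℝ) (hq0 : 1/4 < q) (hq1 : q < 1/2) :
    MemH1Disc (fun z => (1 - z) ^ (-2 * (q:ℂ))) := by
  refine ⟨?_, ?_⟩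
  · intro z hz
    apply DifferentiableAt.differentiableWithinAt
    apply DifferentiableAt.cpow (by fun_prop) (by fun_prop) (one_sub_mem_slit hz)
  · refine ⟨∫ θ in (0:ℝ)..(2 * π), (θ / π) ^ (-2 * q) + ((2 * π - θ) / π) ^ (-2 * q), ?_⟩
    intro r hr0 hr1
    have hpi := Real.pi_pos
    have i1 : IntervalIntegrable (fun θ : ℝ => (θ / π) ^ (-2 * q)) volume 0 (2 * π) := by
      have : (fun θ : ℝ => (θ / π) ^ (-2 * q)) = fun θ => (fun x : ℝ => x ^ (-2 * q)) (π⁻¹ * θ) := by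
        ext θ; rw [div_eq_inv_mul]
      rw [this]
      have := (intervalIntegral.intervalIntegrable_rpow' (a := 0) (b := 2) (r := -2 * q) (by linarith)).comp_mul_left (c := π⁻¹)
      simpa using this
    have i2 : IntervalIntegrable (fun θ : ℝ => ((2 * π - θ) / π) ^ (-2 * q)) volume 0 (2 * π) := by
      have := (i1.comp_sub_left (2 * π)).symm
      simpa using this
    have hne : ∀ θ : ℝ, 1 - (r : ℂ) * Complex.exp ((θ : ℂ) * Complex.I) ∈ slitPlane := by
      intro θ
      apply one_sub_mem_slit
      simp [Complex.norm_exp_ofReal_mul_I, abs_of_pos hr0, hr1]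
    apply intervalIntegral.integral_mono_on_of_le_Ioo (by positivity) _ (i1.add i2)
    · intro θ hθ
      rw [normF]
      set E := Complex.exp ((θ : ℂ) * Complex.I)
      have hE : ‖E‖ = 1 := Complex.norm_exp_ofReal_mul_I θ
      have h1 : ‖1 - E‖ ≤ 2 * ‖1 - r * E‖ := by
        have a1 : ‖1 - E‖ ≤ ‖1 - r * E‖ + ‖(r - 1) * E‖ := by
          refine le_trans (le_of_eq ?_) (norm_add_le _ _); congr 1; ring
        have a2 : ‖((r:ℂ) - 1) * E‖ = 1 - r := by
          rw [norm_mul, hE, mul_one]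
          rw [show (r:ℂ) - 1 = ((r - 1 : ℝ) : ℂ) by push_cast; ring, Complex.norm_real, Real.norm_eq_abs, abs_of_neg (by linarith)]
          ring
        have a3 : 1 - r ≤ ‖1 - r * E‖ := by
          have := norm_sub_norm_le (1:ℂ) (r * E)
          rw [norm_mul, hE, Complex.norm_real] at this
          simpa [abs_of_pos hr0] using this
        linarith
      have h2 : ‖1 - E‖ = 2 * Real.sin (θ / 2) := by
        have hs : 0 ≤ Real.sin (θ / 2) := Real.sin_nonneg_of_nonneg_of_le_pi (by linarith [hθ.1]) (by linarith [hθ.2])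
        have : ‖1 - E‖ ^ 2 = (2 * Real.sin (θ / 2)) ^ 2 := by
          rw [Complex.sq_norm, Complex.normSq_apply]
          simp only [E, sub_re, one_re, sub_im, one_im, Complex.exp_ofReal_mul_I_re, Complex.exp_ofReal_mul_I_im]
          have e1 : Real.cos θ = 1 - 2 * Real.sin (θ/2)^2 := by
            have := Real.cos_two_mul (θ/2)
            rw [show 2 * (θ/2) = θ by ring] at this
            rw [this]; linarith [Real.sin_sq_add_cos_sq (θ/2)]
          nlinarith [Real.sin_sq_add_cos_sq θ]
        exact (sq_eq_sq₀ (norm_nonneg _) (by positivity)).1 this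
      have h3 : Real.sin (θ / 2) ≤ ‖1 - r * E‖ := by linarith
      have hpos : 0 < 2 * π - θ := by linarith [hθ.2]
      have hpos' := hθ.1
      rcases le_total θ π with h | h
      · have h4 : θ / π ≤ Real.sin (θ / 2) := by
          have := Real.mul_le_sin (x := θ / 2) (by linarith [hθ.1]) (by linarith)
          calc θ / π = 2 / π * (θ/2) := by field_simp
            _ ≤ _ := this
        have h5 : ‖1 - r * E‖ ^ (-2 * q) ≤ (θ / π) ^ (-2 * q) :=
          Real.rpow_le_rpow_of_nonpos (by positivity) (h4.trans h3) (by linarith)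
        have h6 : 0 ≤ ((2 * π - θ) / π) ^ (-2 * q) := by positivity
        linarith
      · have h4 : (2 * π - θ) / π ≤ Real.sin (θ / 2) := by
          have := Real.mul_le_sin (x := π - θ / 2) (by linarith [hθ.2]) (by linarith)
          rw [Real.sin_pi_sub] at this
          calc (2 * π - θ) / π = 2 / π * (π - θ/2) := by field_simp
            _ ≤ _ := this
        have h5 : ‖1 - r * E‖ ^ (-2 * q) ≤ ((2 * π - θ) / π) ^ (-2 * q) :=
          Real.rpow_le_rpow_of_nonpos (by positivity) (h4.trans h3) (by linarith)
        have h6 : 0 ≤ (θ / π) ^ (-2 * q) := by positivity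
        linarith
    · apply Continuous.intervalIntegrable
      apply Continuous.norm
      apply Continuous.cpow (by fun_prop) (by fun_prop) hne


lemma fderiv_fderiv_apply {φ : ℂ → ℝ} {z : ℂ} (h : ContDiffAt ℝ 2 φ z) (v w : ℂ) :
    fderiv ℝ (fun x => fderiv ℝ φ x v) z w = fderiv ℝ (fderiv ℝ φ) z w v := by
  have h1 : DifferentiableAt ℝ (fderiv ℝ φ) z :=
    (h.fderiv_right (m := 1) (by norm_num)).differentiableAt (by norm_num)
  have := (h1.hasFDerivAt.clm_apply (hasFDerivAt_const v z)).fderiv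
  rw [this]; simp

lemma lap_eq {φ : ℂ → ℝ} {z : ℂ} (h : ContDiffAt ℝ 2 φ z) :
    lap φ z = Laplacian.laplacian φ z := by
  rw [InnerProductSpace.laplacian_eq_iteratedFDeriv_complexPlane]
  simp only [lap, fderiv_fderiv_apply h, iteratedFDeriv_two_apply]
  simp

lemma lap_congr {φ ψ : ℂ → ℝ} {z : ℂ} (h : φ =ᶠ[𝓝 z] ψ) : lap φ z = lap ψ z := by
  have h' : ∀ v, (fun x => fderiv ℝ φ x v) =ᶠ[𝓝 z] (fun x => fderiv ℝ ψ x v) := by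
    intro v
    filter_upwards [h.eventuallyEq_nhds] with x hx
    rw [hx.fderiv_eq]
  simp only [lap, (h' _).fderiv_eq]

lemma lap_continuousOn {φ : ℂ → ℝ} {s : Set ℂ} (hs : IsOpen s) (h : ContDiffOn ℝ 2 φ s) :
    ContinuousOn (lap φ) s := by
  have h1 : ContDiffOn ℝ 1 (fderiv ℝ φ) s := h.fderiv_of_isOpen hs (by norm_num)
  have h2 : ContDiffOn ℝ 0 (fderiv ℝ (fderiv ℝ φ)) s := h1.fderiv_of_isOpen hs (by norm_num)
  have h3 := h2.continuousOn
  have : ContinuousOn (fun z => fderiv ℝ (fderiv ℝ φ) z 1 1 + fderiv ℝ (fderiv ℝ φ) z I I) s := by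
    fun_prop
  apply this.congr
  intro z hz
  have := h.contDiffAt (hs.mem_nhds hz)
  simp only [lap, fderiv_fderiv_apply this]

lemma line_max {φ : ℂ → ℝ} {z : ℂ} (h : ContDiffAt ℝ 2 φ z) (hm : IsLocalMax φ z) (v : ℂ) :
    fderiv ℝ (fun x => fderiv ℝ φ x v) z v ≤ 0 := by
  by_contra hpos
  push Not at hpos
  set g : ℝ → ℝ := fun t => φ (z + t * v) with hg
  have hγ : ∀ t : ℝ, HasDerivAt (fun t : ℝ => z + t * v) v t := by
    intro t
    have := ((hasDerivAt_id t).ofReal_comp.mul_const v).const_add z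
    simpa using this
  have hγ0 : Tendsto (fun t : ℝ => z + t * v) (𝓝 0) (𝓝 z) := by
    have := (hγ 0).continuousAt.tendsto
    simpa using this
  have hev : ∀ᶠ x in 𝓝 z, DifferentiableAt ℝ φ x := by
    have := h.eventually (by simp)
    filter_upwards [this] with x hx
    exact hx.differentiableAt (by norm_num)
  have hd : ∀ᶠ t : ℝ in 𝓝 (0:ℝ), HasDerivAt g (fderiv ℝ φ (z + t * v) v) t := by
    filter_upwards [hγ0.eventually hev] with t ht
    exact ht.hasFDerivAt.comp_hasDerivAt t (hγ t)
  have hd1 : deriv g =ᶠ[𝓝 0] fun t : ℝ => fderiv ℝ φ (z + t * v) v := by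
    filter_upwards [hd] with t ht using ht.deriv
  have h1 : DifferentiableAt ℝ (fun x => fderiv ℝ φ x v) z := by
    have h1 : DifferentiableAt ℝ (fderiv ℝ φ) z :=
      (h.fderiv_right (m := 1) (by norm_num)).differentiableAt (by norm_num)
    fun_prop
  have hdd : HasDerivAt (fun t : ℝ => fderiv ℝ φ (z + t * v) v) (fderiv ℝ (fun x => fderiv ℝ φ x v) z v) 0 := by
    have h2 : HasFDerivAt (fun x => fderiv ℝ φ x v) (fderiv ℝ (fun x => fderiv ℝ φ x v) z) (z + (0:ℝ) * v) := by
      simpa using h1.hasFDerivAt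
    exact h2.comp_hasDerivAt (0:ℝ) (hγ 0)
  have hm' : IsLocalMax g 0 := by
    have := hγ0.eventually hm
    filter_upwards [this] with t ht
    simpa [hg] using ht
  have e2 : deriv (deriv g) 0 = fderiv ℝ (fun x => fderiv ℝ φ x v) z v := by
    rw [hd1.deriv_eq, hdd.deriv]
  have hmin : IsLocalMin g 0 := by
    apply isLocalMin_of_deriv_deriv_pos (by rw [e2]; exact hpos) hm'.deriv_eq_zero
    exact hd.self_of_nhds.continuousAt
  have hc : g =ᶠ[𝓝 0] fun _ => g 0 := by
    filter_upwards [hmin, hm'] with t a b using le_antisymm b a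
  have hc2 : deriv g =ᶠ[𝓝 0] fun _ => 0 := by
    filter_upwards [hc.eventuallyEq_nhds] with t ht
    rw [ht.deriv_eq]; simp
  have : deriv (deriv g) 0 = 0 := by rw [hc2.deriv_eq]; simp
  linarith

lemma lap_max {φ : ℂ → ℝ} {z : ℂ} (h : ContDiffAt ℝ 2 φ z) (hm : IsLocalMax φ z) :
    lap φ z ≤ 0 := add_nonpos (line_max h hm 1) (line_max h hm I)

/-- explicit subharmonic function -/
def Wf (h : ℂ → ℂ) (z : ℂ) : ℝ := √(1 + ‖h z‖ ^ 2) - 1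

def D1 (h : ℂ → ℂ) (v z : ℂ) : ℝ := inner ℝ (h z) (deriv h z * v) / √(1 + ‖h z‖ ^ 2)

def D2 (h : ℂ → ℂ) (v z : ℂ) : ℝ :=
  (‖deriv h z * v‖ ^ 2 + inner ℝ (h z) (deriv (deriv h) z * v * v)) / √(1 + ‖h z‖ ^ 2)
    - (inner ℝ (h z) (deriv h z * v)) ^ 2 / √(1 + ‖h z‖ ^ 2) ^ 3

def LpW (h : ℂ → ℂ) (z : ℂ) : ℝ :=
  ‖deriv h z‖ ^ 2 * (2 + ‖h z‖ ^ 2) / √(1 + ‖h z‖ ^ 2) ^ 3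

lemma sqpos (x : ℂ) : 0 < 1 + ‖x‖ ^ 2 := by positivity

lemma Lp_nonneg (h : ℂ → ℂ) (z : ℂ) : 0 ≤ LpW h z := by unfold LpW; positivity

lemma Wf_nonneg (h : ℂ → ℂ) (z : ℂ) : 0 ≤ Wf h z := by
  unfold Wf
  have : 1 ≤ √(1 + ‖h z‖ ^ 2) := Real.one_le_sqrt.2 (by nlinarith [norm_nonneg (h z)])
  linarith

lemma Wf_le (h : ℂ → ℂ) (z : ℂ) : Wf h z ≤ ‖h z‖ := by
  unfold Wf
  have : √(1 + ‖h z‖ ^ 2) ≤ 1 + ‖h z‖ := Real.sqrt_le_iff.2 ⟨by positivity, by nlinarith [norm_nonneg (h z)]⟩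
  linarith

lemma le_Wf (h : ℂ → ℂ) (z : ℂ) : ‖h z‖ ≤ Wf h z + 1 := by
  unfold Wf
  have : ‖h z‖ ≤ √(1 + ‖h z‖ ^ 2) := Real.le_sqrt_of_sq_le (by linarith)
  linarith

lemma le_Wf' (h : ℂ → ℂ) (z : ℂ) (hz : 1/2 ≤ ‖h z‖) : ‖h z‖ / 5 ≤ Wf h z := by
  unfold Wf
  have : 1 + ‖h z‖ / 5 ≤ √(1 + ‖h z‖ ^ 2) := Real.le_sqrt_of_sq_le (by nlinarith)
  linarith

lemma D_sum (h : ℂ → ℂ) (z : ℂ) : D2 h 1 z + D2 h I z = LpW h z := by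
  unfold D2 LpW
  set S := √(1 + ‖h z‖ ^ 2) with hS
  have hSp : 0 < S := Real.sqrt_pos.2 (sqpos _)
  have hS2 : S ^ 2 = 1 + ‖h z‖ ^ 2 := Real.sq_sqrt (sqpos _).le
  have hi : deriv (deriv h) z * I * I = - deriv (deriv h) z := by
    rw [mul_assoc, I_mul_I]; ring
  rw [hi]
  simp only [mul_one, inner_neg_right, norm_mul, norm_I]
  have e : (inner ℝ (h z) (deriv h z)) ^ 2 + (inner ℝ (h z) (deriv h z * I)) ^ 2 = ‖h z‖ ^ 2 * ‖deriv h z‖ ^ 2 := by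
    simp only [Complex.inner, Complex.sq_norm, Complex.normSq_apply]
    simp
    ring
  field_simp
  nlinarith [e, hS2]

lemma Wf_fd {h : ℂ → ℂ} {z : ℂ} (hh : DifferentiableAt ℂ h z) :
    ∃ L : ℂ →L[ℝ] ℝ, HasFDerivAt (Wf h) L z ∧ ∀ v, L v = D1 h v z := by
  have h1 : HasFDerivAt h ((ContinuousLinearMap.toSpanSingleton ℂ (deriv h z)).restrictScalars ℝ) z :=
    hh.hasDerivAt.hasFDerivAt.restrictScalars ℝ
  have h2 := ((h1.norm_sq.const_add 1).sqrt (sqpos _).ne').sub_const 1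
  refine ⟨_, h2, ?_⟩
  intro v
  simp [D1]
  field_simp
  ring

lemma D1_fd {h : ℂ → ℂ} {z : ℂ} (hh : DifferentiableAt ℂ h z) (hh' : DifferentiableAt ℂ (deriv h) z) (v : ℂ) :
    ∃ L : ℂ →L[ℝ] ℝ, HasFDerivAt (D1 h v) L z ∧ L v = D2 h v z := by
  have h1 : HasFDerivAt h ((ContinuousLinearMap.toSpanSingleton ℂ (deriv h z)).restrictScalars ℝ) z :=
    hh.hasDerivAt.hasFDerivAt.restrictScalars ℝ
  have h1' : HasFDerivAt (fun x => deriv h x * v) ((ContinuousLinearMap.toSpanSingleton ℂ (deriv (deriv h) z * v)).restrictScalars ℝ) z :=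
    (hh'.hasDerivAt.mul_const v).hasFDerivAt.restrictScalars ℝ
  have h2 := ((h1.norm_sq.const_add 1).sqrt (sqpos _).ne')
  have h2' := (hasDerivAt_inv (Real.sqrt_pos.2 (sqpos (h z))).ne').comp_hasFDerivAt z h2
  have h3 := HasFDerivAt.mul (HasFDerivAt.inner ℝ h1 h1') h2'
  have h4 : D1 h v = fun x => inner ℝ (h x) (deriv h x * v) * (√(1 + ‖h x‖ ^ 2))⁻¹ := by
    ext x; rw [D1, div_eq_mul_inv]
  rw [h4]
  refine ⟨_, h3, ?_⟩
  have hSp : 0 < √(1 + ‖h z‖ ^ 2) := Real.sqrt_pos.2 (sqpos _)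
  simp only [D2]
  simp [-Complex.inner]
  have e1 : v * deriv h z = deriv h z * v := by ring
  have e2 : v * (deriv (deriv h) z * v) = deriv (deriv h) z * v * v := by ring
  rw [e1, e2, real_inner_self_eq_norm_sq, norm_mul]
  field_simp
  ring

lemma Wf_contDiffOn {h : ℂ → ℂ} {s : Set ℂ} (hs : IsOpen s) (hh : DifferentiableOn ℂ h s) :
    ContDiffOn ℝ 2 (Wf h) s := by
  have : ContDiffOn ℝ 2 h s := (hh.contDiffOn hs).restrict_scalars ℝ
  unfold Wf
  apply ContDiffOn.sub _ contDiffOn_const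
  apply ContDiffOn.sqrt
  · exact contDiffOn_const.add (this.norm_sq ℝ)
  · intro x hx; exact (sqpos _).ne'

lemma lap_Wf {h : ℂ → ℂ} {s : Set ℂ} (hs : IsOpen s) (hh : DifferentiableOn ℂ h s) {z : ℂ} (hz : z ∈ s) :
    lap (Wf h) z = LpW h z := by
  rw [← D_sum]
  have key : ∀ v, fderiv ℝ (fun x => fderiv ℝ (Wf h) x v) z v = D2 h v z := by
    intro v
    have e : (fun x => fderiv ℝ (Wf h) x v) =ᶠ[𝓝 z] D1 h v := by
      filter_upwards [hs.mem_nhds hz] with x hx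
      obtain ⟨L, hL, hv⟩ := Wf_fd (hh.differentiableAt (hs.mem_nhds hx))
      rw [hL.fderiv, hv]
    rw [e.fderiv_eq]
    obtain ⟨L, hL, hv⟩ := D1_fd (hh.differentiableAt (hs.mem_nhds hz)) ((hh.deriv hs).differentiableAt (hs.mem_nhds hz)) v
    rw [hL.fderiv, hv]
  simp only [lap, key]


def u0 (ρ : ℂ → ℝ) : ℂ → ℝ := fun z => -(1 - z.re) ^ (3/4 : ℝ) - ρ z

def fp : ℂ → ℝ := fun z => -(1 - z.re) ^ (3/4 : ℝ)

lemma re_lt_of_ball {z : ℂ} (hz : z ∈ ball (0:ℂ) 1) : 0 < 1 - z.re := by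
  rw [mem_ball_zero_iff] at hz
  have := Complex.re_le_norm z
  linarith

lemma re_gt_of_ball {z : ℂ} (hz : z ∈ ball (0:ℂ) 1) : 1 - z.re < 2 := by
  rw [mem_ball_zero_iff] at hz
  have := (abs_le.1 (Complex.abs_re_le_norm z)).1
  linarith

lemma fp_cd : ContDiffOn ℝ 2 fp (ball (0:ℂ) 1) := by
  apply ContDiffOn.neg
  apply ContDiffOn.rpow_const_of_ne
  · apply ContDiff.contDiffOn
    exact contDiff_const.sub Complex.reCLM.contDiff
  · intro x hx; exact (re_lt_of_ball hx).ne'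

lemma rpow_fd (a : ℝ) {z : ℂ} (hz : z ∈ ball (0:ℂ) 1) :
    HasFDerivAt (fun w : ℂ => (1 - w.re) ^ a) ((a * (1 - z.re) ^ (a - 1)) • (-Complex.reCLM)) z := by
  have h1 : HasFDerivAt (fun w : ℂ => 1 - w.re) (-Complex.reCLM) z :=
    (Complex.reCLM.hasFDerivAt).const_sub 1
  exact h1.rpow_const (Or.inl (re_lt_of_ball hz).ne')

lemma lap_fp {z : ℂ} (hz : z ∈ ball (0:ℂ) 1) : lap fp z = 3/16 * (1 - z.re) ^ (-(5:ℝ)/4) := by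
  have key : ∀ v, fderiv ℝ (fun x => fderiv ℝ fp x v) z v = 3/16 * (1 - z.re) ^ (-(5:ℝ)/4) * v.re ^ 2 := by
    intro v
    have e : (fun x => fderiv ℝ fp x v) =ᶠ[𝓝 z] fun x => (3/4 * v.re) * (1 - x.re) ^ (-(1:ℝ)/4) := by
      filter_upwards [isOpen_ball.mem_nhds hz] with x hx
      have := (rpow_fd (3/4) hx).neg.fderiv
      have h2 : fderiv ℝ fp x = _ := this
      rw [h2]
      simp
      norm_num
      ring
    rw [e.fderiv_eq]
    rw [((rpow_fd (-(1:ℝ)/4) hz).const_mul _).fderiv]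
    simp
    norm_num
    ring
  simp only [lap, key]; simp

lemma u0_cd {ρ : ℂ → ℝ} (h : HarmonicOn ρ (ball (0:ℂ) 1)) : ContDiffOn ℝ 2 (u0 ρ) (ball (0:ℂ) 1) :=
  fp_cd.sub h.1

lemma cda {g : ℂ → ℝ} (h : ContDiffOn ℝ 2 g (ball (0:ℂ) 1)) {z : ℂ} (hz : z ∈ ball (0:ℂ) 1) :
    ContDiffAt ℝ 2 g z := h.contDiffAt (isOpen_ball.mem_nhds hz)

lemma lap_u0 {ρ : ℂ → ℝ} (h : HarmonicOn ρ (ball (0:ℂ) 1)) {z : ℂ} (hz : z ∈ ball (0:ℂ) 1) :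
    lap (u0 ρ) z = 3/16 * (1 - z.re) ^ (-(5:ℝ)/4) := by
  rw [← lap_fp hz, lap_eq (cda (u0_cd h) hz), lap_eq (cda fp_cd hz)]
  have := ContDiffAt.laplacian_sub (cda fp_cd hz) (cda h.1 hz)
  have h2 : u0 ρ = fp - ρ := rfl
  rw [h2, this, ← lap_eq (cda h.1 hz), h.2 z hz, sub_zero]

lemma lap_nsq (z : ℂ) : lap (fun z => ‖z‖ ^ 2) z = 4 := by
  have key : ∀ v, fderiv ℝ (fun x => fderiv ℝ (fun z : ℂ => ‖z‖ ^ 2) x v) z v = 2 * ‖v‖ ^ 2 := by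
    intro v
    have e : (fun x => fderiv ℝ (fun z : ℂ => ‖z‖ ^ 2) x v) = fun x => 2 * inner ℝ x v := by
      ext x
      rw [show fderiv ℝ (fun z : ℂ => ‖z‖ ^ 2) x = _ from ((hasFDerivAt_id x).norm_sq).fderiv]
      simp [-Complex.inner]
    rw [e]
    have := ((hasFDerivAt_id (𝕜 := ℝ) z).inner ℝ (hasFDerivAt_const v z))
    rw [show fderiv ℝ (fun x : ℂ => 2 * inner ℝ x v) z = _ from (this.const_mul 2).fderiv]
    simp [-Complex.inner]
  simp only [lap, key]; norm_num

lemma u0_le {ρ : ℂ → ℝ} (hc : ContinuousOn ρ (closedBall (0:ℂ) 1)) (h : HarmonicOn ρ (ball (0:ℂ) 1))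
    (hb : ∀ z ∈ sphere (0:ℂ) 1, ρ z = -(1 - z.re) ^ (3/4 : ℝ)) {z : ℂ} (hz : z ∈ ball (0:ℂ) 1) :
    u0 ρ z ≤ - (1/100 * (1 - ‖z‖ ^ 2)) := by
  set v : ℂ → ℝ := fun z => u0 ρ z - (1/100 : ℝ) • ‖z‖ ^ 2 with hv
  have hnc : ContDiff ℝ 2 (fun z : ℂ => ‖z‖ ^ 2) := contDiff_norm_sq ℝ
  have hvc : ContinuousOn v (closedBall (0:ℂ) 1) := by
    have : ContinuousOn (fun z : ℂ => (1 - z.re) ^ (3/4 : ℝ)) (closedBall (0:ℂ) 1) := by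
      apply ContinuousOn.rpow_const (by fun_prop)
      intro x hx; right; norm_num
    have h2 : ContinuousOn (u0 ρ) (closedBall (0:ℂ) 1) := this.neg.sub hc
    exact h2.sub (by fun_prop)
  obtain ⟨m, hm, hmax⟩ := (isCompact_closedBall (0:ℂ) 1).exists_isMaxOn ⟨0, by simp⟩ hvc
  have hm1 : ‖m‖ = 1 := by
    by_contra hne
    have hmb : m ∈ ball (0:ℂ) 1 := by
      rw [mem_ball_zero_iff]; rw [mem_closedBall_zero_iff] at hm; exact lt_of_le_of_ne hm hne
    have hloc : IsLocalMax v m := by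
      filter_upwards [isOpen_ball.mem_nhds hmb] with x hx using hmax (ball_subset_closedBall hx)
    have hn' : ContDiffAt ℝ 2 ((1/100 : ℝ) • (fun z : ℂ => ‖z‖ ^ 2)) m := (hnc.const_smul (1/100 : ℝ)).contDiffAt
    have hveq : v = u0 ρ - (1/100 : ℝ) • (fun z : ℂ => ‖z‖ ^ 2) := rfl
    have hvd : ContDiffAt ℝ 2 v m := (cda (u0_cd h) hmb).sub hn'
    have h1 := lap_max hvd hloc
    rw [lap_eq hvd, hveq, ContDiffAt.laplacian_sub (cda (u0_cd h) hmb) hn',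
      InnerProductSpace.laplacian_smul _ hnc.contDiffAt, ← lap_eq (cda (u0_cd h) hmb), ← lap_eq hnc.contDiffAt, lap_nsq,
      lap_u0 h hmb] at h1
    have h3 : (1/4 : ℝ) ≤ (1 - m.re) ^ (-(5:ℝ)/4) := by
      calc (1/4 : ℝ) = 2 ^ (-2 : ℝ) := by rw [Real.rpow_neg (by norm_num)]; norm_num
        _ ≤ 2 ^ (-(5:ℝ)/4) := Real.rpow_le_rpow_of_exponent_le (by norm_num) (by norm_num)
        _ ≤ _ := Real.rpow_le_rpow_of_nonpos (re_lt_of_ball hmb) (re_gt_of_ball hmb).le (by norm_num)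
    simp only [smul_eq_mul] at h1
    linarith
  have h2 := hmax (ball_subset_closedBall hz)
  have h3 : v m = - (1/100) := by
    simp only [hv, u0, hm1]
    rw [hb m (by simp [hm1])]
    norm_num
  simp only [mem_ofPred_eq, h3] at h2
  simp only [hv, smul_eq_mul] at h2
  linarith

lemma u0_exh {ρ : ℂ → ℝ} (hc : ContinuousOn ρ (closedBall (0:ℂ) 1))
    (hb : ∀ z ∈ sphere (0:ℂ) 1, ρ z = -(1 - z.re) ^ (3/4 : ℝ)) (r : ℝ) (hr : r < 0) :
    ∃ s : ℝ, 0 < s ∧ s < 1 ∧ ∀ z ∈ ball (0:ℂ) 1, u0 ρ z < r → ‖z‖ < s := by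
  have hvc : ContinuousOn (u0 ρ) (closedBall (0:ℂ) 1) := by
    have : ContinuousOn (fun z : ℂ => (1 - z.re) ^ (3/4 : ℝ)) (closedBall (0:ℂ) 1) := by
      apply ContinuousOn.rpow_const (by fun_prop)
      intro x hx; right; norm_num
    exact this.neg.sub hc
  have hK : IsCompact (closedBall (0:ℂ) 1 ∩ u0 ρ ⁻¹' Iic r) :=
    (isCompact_closedBall (0:ℂ) 1).of_isClosed_subset
      (hvc.preimage_isClosed_of_isClosed isClosed_closedBall isClosed_Iic) inter_subset_left
  rcases (closedBall (0:ℂ) 1 ∩ u0 ρ ⁻¹' Iic r).eq_empty_or_nonempty with he | hne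
  · refine ⟨1/2, by norm_num, by norm_num, ?_⟩
    intro z hz hu
    have : z ∈ closedBall (0:ℂ) 1 ∩ u0 ρ ⁻¹' Iic r := ⟨ball_subset_closedBall hz, hu.le⟩
    rw [he] at this; exact this.elim
  · obtain ⟨m, hm, hmax⟩ := hK.exists_isMaxOn hne continuous_norm.continuousOn
    have hm1 : ‖m‖ < 1 := by
      have h1 : ‖m‖ ≤ 1 := by simpa using hm.1
      rcases h1.lt_or_eq with h | h
      · exact h
      · have h2 : u0 ρ m ≤ r := hm.2
        rw [u0, hb m (by simp [h])] at h2
        simp at h2; linarith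
    refine ⟨(1 + ‖m‖) / 2, by positivity, by linarith, ?_⟩
    intro z hz hu
    have : z ∈ closedBall (0:ℂ) 1 ∩ u0 ρ ⁻¹' Iic r := ⟨ball_subset_closedBall hz, hu.le⟩
    have h3 : ‖z‖ ≤ ‖m‖ := hmax this
    linarith


structure IsCut (s : ℝ) (χ : ℂ → ℝ) : Prop where
  cd : ContDiff ℝ 2 χ
  nn : ∀ z, 0 ≤ χ z
  le1 : ∀ z, χ z ≤ 1
  cs : HasCompactSupport χ
  ts : tsupport χ ⊆ ball (0:ℂ) 1
  one : ∀ z ∈ closedBall (0:ℂ) s, χ z = 1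

lemma exists_cut (s : ℝ) (h0 : 0 < s) (h1 : s < 1) : ∃ χ, IsCut s χ := by
  let b : ContDiffBump (0:ℂ) := ⟨s, (1 + s) / 2, h0, by linarith⟩
  refine ⟨b, b.contDiff, fun z => b.nonneg, fun z => b.le_one, b.hasCompactSupport, ?_, ?_⟩
  · rw [b.tsupport_eq]
    exact closedBall_subset_ball (by show (1 + s) / 2 < 1; linarith)
  · intro z hz; exact b.one_of_mem_closedBall hz

lemma IsCut.mul_cd {s : ℝ} {χ : ℂ → ℝ} (h : IsCut s χ) {g : ℂ → ℝ} (hg : ContDiffOn ℝ 2 g (ball (0:ℂ) 1)) :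
    ContDiff ℝ 2 (fun z => χ z * g z) := by
  rw [contDiff_iff_contDiffAt]
  intro z
  by_cases hz : z ∈ ball (0:ℂ) 1
  · exact h.cd.contDiffAt.mul (cda hg hz)
  · have hz' : z ∉ tsupport χ := fun h' => hz (h.ts h')
    have : (fun z => χ z * g z) =ᶠ[𝓝 z] fun _ => 0 := by
      have := notMem_tsupport_iff_eventuallyEq.1 hz'
      filter_upwards [this] with x hx
      rw [hx]; simp
    exact contDiffAt_const.congr_of_eventuallyEq this

lemma IsCut.mul_cs {s : ℝ} {χ : ℂ → ℝ} (h : IsCut s χ) (g : ℂ → ℝ) :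
    HasCompactSupport (fun z => χ z * g z) := h.cs.mul_right

lemma IsCut.mul_ts {s : ℝ} {χ : ℂ → ℝ} (h : IsCut s χ) (g : ℂ → ℝ) :
    tsupport (fun z => χ z * g z) ⊆ ball (0:ℂ) 1 := (tsupport_mul_subset_left).trans h.ts

lemma IsCut.eqOn {s : ℝ} {χ : ℂ → ℝ} (h : IsCut s χ) (g : ℂ → ℝ) {z : ℂ} (hz : ‖z‖ < s) :
    (fun z => χ z * g z) =ᶠ[𝓝 z] g := by
  have : z ∈ ball (0:ℂ) s := by simpa using hz
  filter_upwards [isOpen_ball.mem_nhds this] with x hx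
  rw [h.one x (ball_subset_closedBall hx), one_mul]

lemma lap_off {φ : ℂ → ℝ} {z : ℂ} (hz : z ∉ tsupport φ) : lap φ z = 0 := by
  have := notMem_tsupport_iff_eventuallyEq.1 hz
  rw [lap_congr this]
  simp [lap]

lemma lap_cont {φ : ℂ → ℝ} (h : ContDiff ℝ 2 φ) : Continuous (lap φ) := by
  rw [← continuousOn_univ]
  exact lap_continuousOn isOpen_univ h.contDiffOn

lemma green_global {U φ : ℂ → ℝ} (hU : ContDiff ℝ 2 U) (hφ : ContDiff ℝ 2 φ) (hUc : HasCompactSupport U)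
    (hφc : HasCompactSupport φ) : ∫ z, U z * lap φ z = ∫ z, lap U z * φ z := by
  have cd1 : ∀ {g : ℂ → ℝ}, ContDiff ℝ 2 g → ∀ v, ContDiff ℝ 1 (fun x => fderiv ℝ g x v) := by
    intro g hg v
    exact (hg.fderiv_right (m := 1) (by norm_num)).clm_apply contDiff_const
  have c2 : ∀ {g : ℂ → ℝ}, ContDiff ℝ 1 g → ∀ v, Continuous (fun x => fderiv ℝ g x v) := by
    intro g hg v
    exact (hg.continuous_fderiv (by norm_num)).clm_apply continuous_const
  have ibp : ∀ {f g : ℂ → ℝ}, ContDiff ℝ 1 f → ContDiff ℝ 1 g → HasCompactSupport f → ∀ v,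
      ∫ x, f x * fderiv ℝ g x v = - ∫ x, fderiv ℝ f x v * g x := by
    intro f g hf hg hfc v
    apply integral_mul_fderiv_eq_neg_fderiv_mul_of_integrable
    · exact ((c2 hf v).mul hg.continuous).integrable_of_hasCompactSupport ((hfc.fderiv_apply ℝ v).mul_right)
    · exact (hf.continuous.mul (c2 hg v)).integrable_of_hasCompactSupport hfc.mul_right
    · exact (hf.continuous.mul hg.continuous).integrable_of_hasCompactSupport hfc.mul_right
    · intro x _; exact hf.differentiable (by norm_num) x
    · intro x _; exact hg.differentiable (by norm_num) x
  have key : ∀ v, ∫ x, U x * fderiv ℝ (fun y => fderiv ℝ φ y v) x v = ∫ x, fderiv ℝ (fun y => fderiv ℝ U y v) x v * φ x := by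
    intro v
    rw [ibp (hU.of_le (by norm_num)) (cd1 hφ v) hUc v,
      ibp (cd1 hU v) (hφ.of_le (by norm_num)) (hUc.fderiv_apply ℝ v) v, neg_neg]
  simp only [lap, mul_add, add_mul]
  rw [integral_add, integral_add, key, key]
  · exact ((c2 (cd1 hU _) _).mul hφ.continuous).integrable_of_hasCompactSupport hφc.mul_left
  · exact ((c2 (cd1 hU _) _).mul hφ.continuous).integrable_of_hasCompactSupport hφc.mul_left
  · exact (hU.continuous.mul (c2 (cd1 hφ _) _)).integrable_of_hasCompactSupport hUc.mul_right
  · exact (hU.continuous.mul (c2 (cd1 hφ _) _)).integrable_of_hasCompactSupport hUc.mul_right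

lemma exists_radius {K : Set ℂ} (hK : IsCompact K) (hs : K ⊆ ball (0:ℂ) 1) :
    ∃ s : ℝ, 0 < s ∧ s < 1 ∧ ∀ z ∈ K, ‖z‖ < s := by
  rcases K.eq_empty_or_nonempty with rfl | hne
  · exact ⟨1/2, by norm_num, by norm_num, by simp⟩
  · obtain ⟨m, hm, hmax⟩ := hK.exists_isMaxOn hne continuous_norm.continuousOn
    have := hs hm
    rw [mem_ball_zero_iff] at this
    refine ⟨(1 + ‖m‖)/2, by positivity, by linarith, ?_⟩
    intro z hz
    have h3 : ‖z‖ ≤ ‖m‖ := hmax hz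
    linarith

lemma green {u φ : ℂ → ℝ} (hu : ContDiffOn ℝ 2 u (ball (0:ℂ) 1)) (hφ : ContDiff ℝ 2 φ)
    (hφc : HasCompactSupport φ) (hφs : tsupport φ ⊆ ball (0:ℂ) 1) :
    ∫ z in ball (0:ℂ) 1, u z * lap φ z = ∫ z in ball (0:ℂ) 1, lap u z * φ z := by
  obtain ⟨s, h0, h1, hs⟩ := exists_radius hφc hφs
  obtain ⟨χ, hχ⟩ := exists_cut s h0 h1
  have hb : ∀ z, z ∉ ball (0:ℂ) 1 → z ∉ tsupport φ := fun z hz h => hz (hφs h)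
  rw [setIntegral_eq_integral_of_forall_compl_eq_zero, setIntegral_eq_integral_of_forall_compl_eq_zero]
  · have e1 : ∀ z, u z * lap φ z = (χ z * u z) * lap φ z := by
      intro z
      by_cases hz : z ∈ tsupport φ
      · rw [hχ.one z (by simpa using (hs z hz).le), one_mul]
      · rw [lap_off hz]; simp
    have e2 : ∀ z, lap u z * φ z = lap (fun z => χ z * u z) z * φ z := by
      intro z
      by_cases hz : z ∈ tsupport φ
      · rw [lap_congr (hχ.eqOn u (hs z hz))]
      · rw [image_eq_zero_of_notMem_tsupport hz]; simp
    simp_rw [e1, e2]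
    exact green_global (hχ.mul_cd hu) hφ (hχ.mul_cs u) hφc
  · intro z hz; rw [image_eq_zero_of_notMem_tsupport (hb z hz)]; simp
  · intro z hz; rw [lap_off (hb z hz)]; simp


lemma cont_mul {g φ : ℂ → ℝ} (hg : ContinuousOn g (ball (0:ℂ) 1)) (hφ : Continuous φ)
    (hφs : tsupport φ ⊆ ball (0:ℂ) 1) : Continuous (fun z => g z * φ z) := by
  rw [continuous_iff_continuousAt]
  intro z
  by_cases hz : z ∈ ball (0:ℂ) 1
  · exact (hg.continuousAt (isOpen_ball.mem_nhds hz)).mul hφ.continuousAt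
  · have hz' : z ∉ tsupport φ := fun h' => hz (hφs h')
    have : (fun z => g z * φ z) =ᶠ[𝓝 z] fun _ => 0 := by
      filter_upwards [notMem_tsupport_iff_eventuallyEq.1 hz'] with x hx
      rw [hx]; simp
    exact continuousAt_const.congr this.symm

lemma int_mul {g φ : ℂ → ℝ} (hg : ContinuousOn g (ball (0:ℂ) 1)) (hφ : Continuous φ)
    (hφc : HasCompactSupport φ) (hφs : tsupport φ ⊆ ball (0:ℂ) 1) : Integrable (fun z => g z * φ z) :=
  (cont_mul hg hφ hφs).integrable_of_hasCompactSupport hφc.mul_left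

lemma lap_ts (φ : ℂ → ℝ) : tsupport (lap φ) ⊆ tsupport φ := by
  apply closure_minimal _ (isClosed_tsupport φ)
  intro z hz
  by_contra h
  exact hz (lap_off h)

lemma lap_cs {φ : ℂ → ℝ} (h : HasCompactSupport φ) : HasCompactSupport (lap φ) :=
  IsCompact.of_isClosed_subset h (isClosed_tsupport _) (lap_ts φ)

section
variable {u : ℂ → ℝ} {ν : Measure ℂ}

lemma riesz_eq (hu : ContDiffOn ℝ 2 u (ball (0:ℂ) 1))
    (hν : IsRieszMeasure u (ball (0:ℂ) 1) ν) {φ : ℂ → ℝ} (hφ : ContDiff ℝ 2 φ)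
    (hφc : HasCompactSupport φ) (hφs : tsupport φ ⊆ ball (0:ℂ) 1) :
    ∫ z, φ z ∂ν = (4:ℝ)⁻¹ * ∫ z in ball (0:ℂ) 1, lap u z * φ z := by
  rw [hν.2 φ hφ hφc hφs, green hu hφ hφc hφs]

lemma riesz_r (hu : ContDiffOn ℝ 2 u (ball (0:ℂ) 1))
    (hν : IsRieszMeasure u (ball (0:ℂ) 1) ν) {νr : Measure ℂ} {r : ℝ}
    (hνr : IsRieszMeasure (fun z => max (u z) r) (ball (0:ℂ) 1) νr) {φ : ℂ → ℝ} (hφ : ContDiff ℝ 2 φ)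
    (hφc : HasCompactSupport φ) (hφs : tsupport φ ⊆ ball (0:ℂ) 1) :
    ∫ z, φ z ∂νr = ∫ z, φ z ∂ν + (4:ℝ)⁻¹ * ∫ z in ball (0:ℂ) 1, (max (u z) r - u z) * lap φ z := by
  rw [hν.2 φ hφ hφc hφs, hνr.2 φ hφ hφc hφs, ← mul_add, ← integral_add]
  · congr 2; ext z; ring
  · exact (int_mul hu.continuousOn (lap_cont hφ) (lap_cs hφc) ((lap_ts φ).trans hφs)).integrableOn
  · refine (int_mul ?_ (lap_cont hφ) (lap_cs hφc) ((lap_ts φ).trans hφs)).integrableOn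
    exact (hu.continuousOn.sup continuousOn_const).sub hu.continuousOn

lemma pos_int (hu : ContDiffOn ℝ 2 u (ball (0:ℂ) 1)) (hlp : ∀ z ∈ ball (0:ℂ) 1, 0 < lap u z)
    {s : ℝ} (h0 : 0 < s) (h1 : s < 1) {χ : ℂ → ℝ} (hχ : IsCut s χ) :
    0 < ∫ z in ball (0:ℂ) 1, lap u z * χ z := by
  rw [setIntegral_pos_iff_support_of_nonneg_ae]
  · refine lt_of_lt_of_le (measure_ball_pos volume (0:ℂ) h0) (measure_mono ?_)
    intro z hz
    have hz1 : z ∈ ball (0:ℂ) 1 := ball_subset_ball h1.le hz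
    refine ⟨?_, hz1⟩
    rw [Function.mem_support, hχ.one z (ball_subset_closedBall hz), mul_one]
    exact (hlp z hz1).ne'
  · filter_upwards [ae_restrict_mem measurableSet_ball] with z hz
    exact mul_nonneg (hlp z hz).le (hχ.nn z)
  · exact (int_mul (lap_continuousOn isOpen_ball hu) hχ.cd.continuous hχ.cs hχ.ts).integrableOn

lemma fin_of_int {m : Measure ℂ} {s : ℝ} {χ : ℂ → ℝ} (hχ : IsCut s χ) (h : ∫ z, χ z ∂m ≠ 0) :
    m (closedBall 0 s) < ⊤ := by
  have hi : Integrable χ m := by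
    by_contra hn
    exact h (integral_undef hn)
  refine lt_of_le_of_lt (measure_mono ?_) (hi.measure_norm_ge_lt_top (ε := 1) one_pos)
  intro z hz
  simp [hχ.one z hz]

lemma nu_fin (hu : ContDiffOn ℝ 2 u (ball (0:ℂ) 1)) (hlp : ∀ z ∈ ball (0:ℂ) 1, 0 < lap u z)
    (hν : IsRieszMeasure u (ball (0:ℂ) 1) ν) {s : ℝ} (h0 : 0 < s) (h1 : s < 1) :
    ν (closedBall 0 s) < ⊤ := by
  obtain ⟨χ, hχ⟩ := exists_cut s h0 h1
  apply fin_of_int hχ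
  rw [riesz_eq hu hν hχ.cd hχ.cs hχ.ts]
  have := pos_int hu hlp h0 h1 hχ
  positivity

lemma nur_fin (hu : ContDiffOn ℝ 2 u (ball (0:ℂ) 1)) (hlp : ∀ z ∈ ball (0:ℂ) 1, 0 < lap u z)
    (hν : IsRieszMeasure u (ball (0:ℂ) 1) ν) {νr : Measure ℂ} {r : ℝ}
    (hνr : IsRieszMeasure (fun z => max (u z) r) (ball (0:ℂ) 1) νr)
    {s : ℝ} (h0 : 0 < s) (h1 : s < 1) (hs : ∀ z ∈ ball (0:ℂ) 1, u z < r → ‖z‖ < s) :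
    νr (closedBall 0 s) < ⊤ := by
  obtain ⟨χ, hχ⟩ := exists_cut s h0 h1
  apply fin_of_int hχ
  rw [riesz_r hu hν hνr hχ.cd hχ.cs hχ.ts, riesz_eq hu hν hχ.cd hχ.cs hχ.ts]
  have e : ∫ z in ball (0:ℂ) 1, (max (u z) r - u z) * lap χ z = 0 := by
    apply setIntegral_eq_zero_of_forall_eq_zero
    intro z hz
    rcases lt_or_ge (u z) r with h | h
    · have : χ =ᶠ[𝓝 z] fun _ => 1 := by
        have hz' : z ∈ ball (0:ℂ) s := by simpa using hs z hz h
        filter_upwards [isOpen_ball.mem_nhds hz'] with x hx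
        exact hχ.one x (ball_subset_closedBall hx)
      rw [lap_congr this]; simp [lap]
    · rw [max_eq_left h]; simp
  rw [e]
  have := pos_int hu hlp h0 h1 hχ
  positivity

lemma lint_restrict {m : Measure ℂ} {K : Set ℂ} (hK : MeasurableSet K) {g : ℂ → ℝ≥0∞}
    (h : ∀ z, z ∉ K → g z = 0) : ∫⁻ z, g z ∂m = ∫⁻ z in K, g z ∂m := by
  rw [← lintegral_indicator hK]
  congr 1; ext z
  by_cases hz : z ∈ K
  · rw [indicator_of_mem hz]
  · rw [indicator_of_notMem hz, h z hz]

lemma key (hu : ContDiffOn ℝ 2 u (ball (0:ℂ) 1)) (hlp : ∀ z ∈ ball (0:ℂ) 1, 0 < lap u z)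
    (hν : IsRieszMeasure u (ball (0:ℂ) 1) ν) {μ : Measure ℂ} {r : ℝ}
    (hμ : IsMAMeasure u (ball (0:ℂ) 1) ν r μ)
    {s : ℝ} (h0 : 0 < s) (h1 : s < 1) (hs : ∀ z ∈ ball (0:ℂ) 1, u z < r → ‖z‖ < s)
    {w : ℂ → ℝ} (hw : ContDiffOn ℝ 2 w (ball (0:ℂ) 1)) (hw0 : ∀ z, 0 ≤ w z)
    (hwl : ∀ z ∈ ball (0:ℂ) 1, 0 ≤ lap w z) :
    (∫⁻ z in ball (0:ℂ) 1 ∩ {z | u z < r}, ENNReal.ofReal ((r - u z) * lap w z) ≤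
      4 * ∫⁻ z, ENNReal.ofReal (w z) ∂μ) ∧
    (∫⁻ z in ball (0:ℂ) 1 ∩ {z | u z < r}, ENNReal.ofReal (w z) ∂ν ≤ ∫⁻ z, ENNReal.ofReal (w z) ∂μ) := by
  obtain ⟨νr, hνr, rfl⟩ := hμ
  set E := {z | z ∈ ball (0:ℂ) 1 ∧ r ≤ u z} with hE
  have hBo : IsOpen (ball (0:ℂ) 1 ∩ {z | u z < r}) :=
    hu.continuousOn.isOpen_inter_preimage isOpen_ball isOpen_Iio
  have hEm : MeasurableSet E := by
    have : E = ball (0:ℂ) 1 \ (ball (0:ℂ) 1 ∩ {z | u z < r}) := by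
      ext z; simp [hE]
    rw [this]
    exact measurableSet_ball.diff hBo.measurableSet
  obtain ⟨χ, hχ⟩ := exists_cut s h0 h1
  set φ : ℂ → ℝ := fun z => χ z * w z with hφ
  have hφ0 : ∀ z, 0 ≤ φ z := fun z => mul_nonneg (hχ.nn z) (hw0 z)
  have hφd := hχ.mul_cd hw
  have hφc := hχ.mul_cs w
  have hφs := hχ.mul_ts w
  have hφle : ∀ z, φ z ≤ w z := fun z => mul_le_of_le_one_left (hw0 z) (hχ.le1 z)
  have hφB : ∀ z ∈ ball (0:ℂ) 1 ∩ {z | u z < r}, φ =ᶠ[𝓝 z] w := fun z hz => hχ.eqOn w (hs z hz.1 hz.2)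
  -- compact set
  obtain ⟨t', ht0, ht1, ht⟩ := exists_radius hφc hφs
  set t := max s t'
  have htt0 : 0 < t := lt_max_of_lt_left h0
  have htt1 : t < 1 := max_lt h1 ht1
  set K := closedBall (0:ℂ) t
  have hK : MeasurableSet K := measurableSet_closedBall
  have f1 : νr K < ⊤ := nur_fin hu hlp hν hνr htt0 htt1 (fun z hz h => (hs z hz h).trans_le (le_max_left _ _))
  have f2 : ν K < ⊤ := nu_fin hu hlp hν htt0 htt1
  have hφK : ∀ z, z ∉ K → ENNReal.ofReal (φ z) = 0 := by
    intro z hz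
    have h2 : z ∉ tsupport φ := fun h =>
      hz (mem_closedBall_zero_iff.2 ((ht z h).le.trans (le_max_right _ _)))
    have h3 := image_eq_zero_of_notMem_tsupport h2
    rw [h3, ENNReal.ofReal_zero]
  have : IsFiniteMeasure (νr.restrict K) := ⟨by simpa using f1⟩
  have : IsFiniteMeasure (ν.restrict K) := ⟨by simpa using f2⟩
  have : IsFiniteMeasure ((ν.restrict E).restrict K) := ⟨by
    rw [Measure.restrict_apply_univ]; exact (Measure.restrict_apply_le _ _).trans_lt f2⟩
  have hle : νr.restrict K ≤ (νr - ν.restrict E).restrict K + (ν.restrict E).restrict K := by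
    rw [Measure.restrict_sub_eq_restrict_sub_restrict hK]
    exact le_sub_add_meas
  set g : ℂ → ℝ≥0∞ := fun z => ENNReal.ofReal (φ z) with hg
  have L1 : ∫⁻ z, g z ∂νr ≤ ∫⁻ z, g z ∂(νr - ν.restrict E) + ∫⁻ z in E, g z ∂ν := by
    rw [lint_restrict hK hφK, lint_restrict (m := νr - ν.restrict E) hK hφK,
      lint_restrict (m := ν.restrict E) hK hφK, ← lintegral_add_measure]
    exact lintegral_mono' hle le_rfl
  have hφνi : Integrable φ ν := by
    have : IntegrableOn φ K ν := by
      have := (hφd.continuous.continuousOn (s := K)).integrableOn_compact' (μ := ν.restrict K) (isCompact_closedBall _ _) hK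
      rwa [IntegrableOn, Measure.restrict_restrict hK, inter_self] at this
    rw [integrableOn_iff_integrable_of_support_subset] at this
    · exact this
    · intro z hz
      have := ht z (subset_tsupport _ hz)
      exact mem_closedBall_zero_iff.2 (this.le.trans (le_max_right _ _))
  have hνi : ENNReal.ofReal (∫ z, φ z ∂ν) = ∫⁻ z, g z ∂ν :=
    ofReal_integral_eq_lintegral_ofReal hφνi (Eventually.of_forall hφ0)
  have hνfin : ∫⁻ z in E, g z ∂ν ≠ ⊤ := by
    refine ne_top_of_le_ne_top ?_ (setLIntegral_le_lintegral E g)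
    rw [← hνi]; exact ENNReal.ofReal_ne_top
  have L2 : ENNReal.ofReal (∫ z, φ z ∂νr) ≤ ∫⁻ z, g z ∂νr := by
    by_cases hi : Integrable φ νr
    · exact (ofReal_integral_eq_lintegral_ofReal hi (Eventually.of_forall hφ0)).le
    · rw [integral_undef hi]; simp
  set T := ∫ z in ball (0:ℂ) 1, (max (u z) r - u z) * lap φ z with hT
  have hTnn : ∀ z ∈ ball (0:ℂ) 1, 0 ≤ (max (u z) r - u z) * lap φ z := by
    intro z hz
    rcases lt_or_ge (u z) r with h | h
    · rw [lap_congr (hφB z ⟨hz, h⟩)]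
      exact mul_nonneg (by linarith [le_max_left (u z) r]) (hwl z hz)
    · rw [max_eq_left h]; simp
  have hTi : IntegrableOn (fun z => (max (u z) r - u z) * lap φ z) (ball (0:ℂ) 1) := by
    refine (int_mul ?_ (lap_cont hφd) (lap_cs hφc) ((lap_ts φ).trans hφs)).integrableOn
    exact (hu.continuousOn.sup continuousOn_const).sub hu.continuousOn
  have hT0 : 0 ≤ T := setIntegral_nonneg measurableSet_ball hTnn
  have hTl : ENNReal.ofReal T = ∫⁻ z in ball (0:ℂ) 1, ENNReal.ofReal ((max (u z) r - u z) * lap φ z) :=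
    ofReal_integral_eq_lintegral_ofReal hTi (by
      filter_upwards [ae_restrict_mem measurableSet_ball] with z hz using hTnn z hz)
  rw [riesz_r hu hν hνr hφd hφc hφs, ENNReal.ofReal_add (integral_nonneg hφ0) (by positivity), hνi,
    ← lintegral_add_compl g hEm] at L2
  have L3 : ∫⁻ z in Eᶜ, g z ∂ν + ENNReal.ofReal (4⁻¹ * T) ≤ ∫⁻ z, g z ∂(νr - ν.restrict E) := by
    have := L2.trans L1
    rw [add_assoc, add_comm (∫⁻ z, g z ∂(νr - ν.restrict E))] at this
    exact (ENNReal.add_le_add_iff_left hνfin).1 this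
  have L4 : ∫⁻ z, g z ∂(νr - ν.restrict E) ≤ ∫⁻ z, ENNReal.ofReal (w z) ∂(νr - ν.restrict E) :=
    lintegral_mono (fun z => ENNReal.ofReal_le_ofReal (hφle z))
  constructor
  · calc ∫⁻ z in ball (0:ℂ) 1 ∩ {z | u z < r}, ENNReal.ofReal ((r - u z) * lap w z)
        = ∫⁻ z in ball (0:ℂ) 1 ∩ {z | u z < r}, ENNReal.ofReal ((max (u z) r - u z) * lap φ z) := by
          apply setLIntegral_congr_fun hBo.measurableSet
          intro z hz
          simp only
          rw [lap_congr (hφB z hz), max_eq_right (le_of_lt hz.2)]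
      _ ≤ ENNReal.ofReal T := by
          rw [hTl]; exact lintegral_mono_set inter_subset_left
      _ = 4 * ENNReal.ofReal (4⁻¹ * T) := by
          rw [ENNReal.ofReal_mul (by norm_num), ← mul_assoc, ← ENNReal.ofReal_ofNat 4, ← ENNReal.ofReal_mul (by norm_num)]
          norm_num
      _ ≤ _ := by
          gcongr
          exact le_trans le_add_self (L3.trans L4)
  · calc ∫⁻ z in ball (0:ℂ) 1 ∩ {z | u z < r}, ENNReal.ofReal (w z) ∂ν
        = ∫⁻ z in ball (0:ℂ) 1 ∩ {z | u z < r}, g z ∂ν := by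
          apply setLIntegral_congr_fun hBo.measurableSet
          intro z hz
          simp only [hg]
          rw [(hφB z hz).self_of_nhds]
      _ ≤ ∫⁻ z in Eᶜ, g z ∂ν := by
          apply lintegral_mono_set
          intro z hz hz'
          exact absurd hz.2 (not_lt.2 hz'.2)
      _ ≤ _ := le_trans le_self_add (L3.trans L4)

end

structure Hyp (ρ : ℂ → ℝ) (ν : Measure ℂ) (μfam : ℝ → Measure ℂ) : Prop where
  hc : ContinuousOn ρ (closedBall (0:ℂ) 1)
  hh : HarmonicOn ρ (ball (0:ℂ) 1)
  hb : ∀ z ∈ sphere (0:ℂ) 1, ρ z = -(1 - z.re) ^ (3/4 : ℝ)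
  hν : IsRieszMeasure (u0 ρ) (ball (0:ℂ) 1) ν
  hμ : ∀ r : ℝ, r < 0 → IsMAMeasure (u0 ρ) (ball (0:ℂ) 1) ν r (μfam r)

lemma ps_bound {μfam : ℝ → Measure ℂ} {f : ℂ → ℂ} (h : psNormPow 1 μfam f < ⊤) :
    ∃ C : ℝ≥0∞, C < ⊤ ∧ ∀ r0 : ℝ, r0 < 0 → ∃ r, r0 < r ∧ r < 0 ∧
      ∫⁻ z, ENNReal.ofReal (Wf f z) ∂(μfam r) ≤ C := by
  obtain ⟨C, hC1, hC2⟩ := exists_between h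
  refine ⟨C, hC2, fun r0 hr0 => ?_⟩
  have h1 := eventually_lt_of_limsup_lt hC1
  have h2 : ∀ᶠ r in 𝓝[<] (0:ℝ), r0 < r ∧ r < 0 := by
    exact Ioo_mem_nhdsLT hr0
  obtain ⟨r, ha, hb⟩ := (h1.and h2).exists
  refine ⟨r, hb.1, hb.2, le_trans (lintegral_mono fun z => ?_) ha.le⟩
  apply ENNReal.ofReal_le_ofReal
  rw [Real.rpow_one]
  exact Wf_le f z

lemma Hyp.lp {ρ : ℂ → ℝ} {ν : Measure ℂ} {μfam : ℝ → Measure ℂ} (H : Hyp ρ ν μfam) :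
    ∀ z ∈ ball (0:ℂ) 1, 0 < lap (u0 ρ) z := by
  intro z hz
  rw [lap_u0 H.hh hz]
  have := re_lt_of_ball hz
  have : 0 < 1 - z.re := by linarith
  positivity

lemma Hyp.sub {ρ : ℂ → ℝ} {ν : Measure ℂ} {μfam : ℝ → Measure ℂ} (H : Hyp ρ ν μfam)
    {s : ℝ} (h0 : 0 < s) (h1 : s < 1) {r : ℝ} (hr : -(1/200 * (1 - s^2)) < r) :
    ball (0:ℂ) s ⊆ ball (0:ℂ) 1 ∩ {z | u0 ρ z < r} := by
  intro z hz
  have hz1 : z ∈ ball (0:ℂ) 1 := ball_subset_ball h1.le hz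
  refine ⟨hz1, ?_⟩
  have := u0_le H.hc H.hh H.hb hz1
  rw [mem_ball_zero_iff] at hz
  have h3 : ‖z‖^2 ≤ s^2 := by gcongr
  have h4 : s^2 < 1 := by nlinarith
  show u0 ρ z < r
  linarith

lemma Hyp.boundA {ρ : ℂ → ℝ} {ν : Measure ℂ} {μfam : ℝ → Measure ℂ} (H : Hyp ρ ν μfam)
    {f : ℂ → ℂ} (hf : MemPS 1 (ball (0:ℂ) 1) μfam f) :
    ∃ C : ℝ≥0∞, C < ⊤ ∧ ∀ s : ℝ, 0 < s → s < 1 →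
      ∫⁻ z in ball (0:ℂ) s, ENNReal.ofReal ((1 - ‖z‖^2) * LpW f z) ≤ C := by
  obtain ⟨C, hC, hb⟩ := ps_bound hf.2
  refine ⟨ENNReal.ofReal 200 * (4 * C), ENNReal.mul_lt_top (by simp) (ENNReal.mul_lt_top (by simp) hC), fun s h0 h1 => ?_⟩
  have h4 : s^2 < 1 := by nlinarith
  obtain ⟨r, hr1, hr2, hr3⟩ := hb (-(1/200 * (1 - s^2))) (by linarith)
  obtain ⟨t, ht0, ht1, ht⟩ := u0_exh H.hc H.hb r hr2
  have K := (key (u0_cd H.hh) H.lp H.hν (H.hμ r hr2) ht0 ht1 ht (Wf_contDiffOn isOpen_ball hf.1)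
    (Wf_nonneg f) (fun z hz => by rw [lap_Wf isOpen_ball hf.1 hz]; exact Lp_nonneg _ _)).1
  calc ∫⁻ z in ball (0:ℂ) s, ENNReal.ofReal ((1 - ‖z‖^2) * LpW f z)
      ≤ ∫⁻ z in ball (0:ℂ) s, ENNReal.ofReal 200 * ENNReal.ofReal ((r - u0 ρ z) * lap (Wf f) z) := by
        apply setLIntegral_mono' measurableSet_ball
        intro z hz
        have hz1 : z ∈ ball (0:ℂ) 1 := ball_subset_ball h1.le hz
        rw [← ENNReal.ofReal_mul (by norm_num), lap_Wf isOpen_ball hf.1 hz1, ← mul_assoc]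
        apply ENNReal.ofReal_le_ofReal
        apply mul_le_mul_of_nonneg_right _ (Lp_nonneg _ _)
        have := u0_le H.hc H.hh H.hb hz1
        rw [mem_ball_zero_iff] at hz
        have h3 : ‖z‖^2 ≤ s^2 := by gcongr
        linarith
    _ = ENNReal.ofReal 200 * ∫⁻ z in ball (0:ℂ) s, ENNReal.ofReal ((r - u0 ρ z) * lap (Wf f) z) :=
        lintegral_const_mul' _ _ (by simp)
    _ ≤ ENNReal.ofReal 200 * ∫⁻ z in ball (0:ℂ) 1 ∩ {z | u0 ρ z < r}, ENNReal.ofReal ((r - u0 ρ z) * lap (Wf f) z) := by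
        gcongr
        exact H.sub h0 h1 hr1
    _ ≤ _ := by
        gcongr
        exact K.trans (by gcongr)

lemma Hyp.boundB {ρ : ℂ → ℝ} {ν : Measure ℂ} {μfam : ℝ → Measure ℂ} (H : Hyp ρ ν μfam)
    {f : ℂ → ℂ} (hf : MemPS 1 (ball (0:ℂ) 1) μfam f) :
    ∃ C : ℝ≥0∞, C < ⊤ ∧ ∀ s : ℝ, 0 < s → s < 1 →
      ∫⁻ z in ball (0:ℂ) s, ENNReal.ofReal (lap (u0 ρ) z * Wf f z) ≤ C := by
  obtain ⟨C, hC, hb⟩ := ps_bound hf.2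
  refine ⟨ENNReal.ofReal 4 * C, ENNReal.mul_lt_top (by simp) hC, fun s h0 h1 => ?_⟩
  obtain ⟨χ, hχ⟩ := exists_cut s h0 h1
  have hw := Wf_contDiffOn isOpen_ball hf.1
  obtain ⟨s', hs0, hs1, hs'⟩ := exists_radius (hχ.mul_cs (Wf f)) (hχ.mul_ts (Wf f))
  have h4 : s'^2 < 1 := by nlinarith
  obtain ⟨r, hr1, hr2, hr3⟩ := hb (-(1/200 * (1 - s'^2))) (by linarith)
  obtain ⟨t, ht0, ht1, ht⟩ := u0_exh H.hc H.hb r hr2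
  have K := (key (u0_cd H.hh) H.lp H.hν (H.hμ r hr2) ht0 ht1 ht hw
    (Wf_nonneg f) (fun z hz => by rw [lap_Wf isOpen_ball hf.1 hz]; exact Lp_nonneg _ _)).2
  have R := riesz_eq (u0_cd H.hh) H.hν (hχ.mul_cd hw) (hχ.mul_cs (Wf f)) (hχ.mul_ts (Wf f))
  have hI : IntegrableOn (fun z => lap (u0 ρ) z * (χ z * Wf f z)) (ball (0:ℂ) 1) :=
    (int_mul (lap_continuousOn isOpen_ball (u0_cd H.hh)) (hχ.mul_cd hw).continuous
      (hχ.mul_cs (Wf f)) (hχ.mul_ts (Wf f))).integrableOn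
  calc ∫⁻ z in ball (0:ℂ) s, ENNReal.ofReal (lap (u0 ρ) z * Wf f z)
      = ∫⁻ z in ball (0:ℂ) s, ENNReal.ofReal (lap (u0 ρ) z * (χ z * Wf f z)) := by
        apply setLIntegral_congr_fun measurableSet_ball
        intro z hz
        simp only [hχ.one z (ball_subset_closedBall hz), one_mul]
    _ ≤ ∫⁻ z in ball (0:ℂ) 1, ENNReal.ofReal (lap (u0 ρ) z * (χ z * Wf f z)) :=
        lintegral_mono_set (ball_subset_ball h1.le)
    _ = ENNReal.ofReal (∫ z in ball (0:ℂ) 1, lap (u0 ρ) z * (χ z * Wf f z)) := by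
        rw [ofReal_integral_eq_lintegral_ofReal hI]
        filter_upwards [ae_restrict_mem measurableSet_ball] with z hz
        exact mul_nonneg (H.lp z hz).le (mul_nonneg (hχ.nn z) (Wf_nonneg f z))
    _ = ENNReal.ofReal 4 * ENNReal.ofReal (∫ z, χ z * Wf f z ∂ν) := by
        rw [R, ← ENNReal.ofReal_mul (by norm_num)]; congr 1; ring
    _ ≤ ENNReal.ofReal 4 * C := by
        gcongr
        calc ENNReal.ofReal (∫ z, χ z * Wf f z ∂ν) ≤ ∫⁻ z, ENNReal.ofReal (χ z * Wf f z) ∂ν := by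
              by_cases hi : Integrable (fun z => χ z * Wf f z) ν
              · exact (ofReal_integral_eq_lintegral_ofReal hi
                  (Eventually.of_forall fun z => mul_nonneg (hχ.nn z) (Wf_nonneg f z))).le
              · rw [integral_undef hi]; simp
          _ = ∫⁻ z in ball (0:ℂ) s', ENNReal.ofReal (χ z * Wf f z) ∂ν := by
              apply lint_restrict measurableSet_ball
              intro z hz
              have h2 : z ∉ tsupport (fun z => χ z * Wf f z) := fun h =>
                hz (mem_ball_zero_iff.2 (hs' z h))
              have h3 := image_eq_zero_of_notMem_tsupport h2
              rw [h3, ENNReal.ofReal_zero]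
          _ ≤ ∫⁻ z in ball (0:ℂ) s', ENNReal.ofReal (Wf f z) ∂ν := by
              apply lintegral_mono
              intro z
              exact ENNReal.ofReal_le_ofReal (mul_le_of_le_one_left (Wf_nonneg f z) (hχ.le1 z))
          _ ≤ _ := lintegral_mono_set (H.sub hs0 hs1 hr1)
          _ ≤ _ := K
          _ ≤ C := hr3

lemma lint_ball_le {g : ℂ → ℝ≥0∞} {C : ℝ≥0∞} (h : ∀ s : ℝ, 0 < s → s < 1 → ∫⁻ z in ball (0:ℂ) s, g z ≤ C) :
    ∫⁻ z in ball (0:ℂ) 1, g z ≤ C := by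
  have e : ball (0:ℂ) 1 = ⋃ n : ℕ, ball (0:ℂ) (1 - 1/((n:ℝ)+2)) := by
    ext z
    simp only [mem_iUnion, mem_ball_zero_iff]
    constructor
    · intro hz
      obtain ⟨n, hn⟩ := exists_nat_one_div_lt (sub_pos.2 hz)
      refine ⟨n, ?_⟩
      have : 1/((n:ℝ)+2) ≤ 1/((n:ℝ)+1) := by gcongr; norm_num
      linarith
    · rintro ⟨n, hn⟩
      have : 0 < 1/((n:ℝ)+2) := by positivity
      linarith
  have mono : Monotone (fun n : ℕ => ball (0:ℂ) (1 - 1/((n:ℝ)+2))) := by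
    intro a b hab
    apply ball_subset_ball
    gcongr
  rw [e, setLIntegral_iUnion_of_directed _ (directed_of_isDirected_le mono)]
  apply iSup_le
  intro n
  have : 1/((n:ℝ)+2) ≤ 1/2 := by gcongr; linarith [Nat.cast_nonneg (α := ℝ) n]
  have : 0 < 1/((n:ℝ)+2) := by positivity
  apply h <;> linarith

lemma Hyp.notmem {ρ : ℂ → ℝ} {ν : Measure ℂ} {μfam : ℝ → Measure ℂ} (H : Hyp ρ ν μfam)
    {q : ℝ} (hq0 : 1/4 < q) (hq1 : q < 1/2) :
    ¬ MemPS 1 (ball (0:ℂ) 1) μfam (fun z => (1 - z) ^ (-2 * (q:ℂ))) := by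
  intro hf
  obtain ⟨C, hC, hb⟩ := H.boundB hf
  have h1 := lint_ball_le hb
  have p := part1 q hq0 hq1
  have : ∫⁻ z in ball (0:ℂ) 1,
        ENNReal.ofReal (‖(1 - z) ^ (-2 * (q:ℂ))‖ * (1 - z.re) ^ (-(5:ℝ)/4)) ≤ ENNReal.ofReal (80/3) * C := by
    refine le_trans ?_ (mul_le_mul_right h1 (ENNReal.ofReal (80/3)))
    rw [← lintegral_const_mul' _ _ (by simp)]
    apply setLIntegral_mono' measurableSet_ball
    intro z hz
    rw [← ENNReal.ofReal_mul (by norm_num), lap_u0 H.hh hz]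
    apply ENNReal.ofReal_le_ofReal
    set F : ℂ → ℂ := fun z => (1 - z) ^ (-2 * (q:ℂ)) with hF
    have hF2 : 1/2 ≤ ‖F z‖ := by
      rw [hF]; simp only
      rw [normF]
      rw [mem_ball_zero_iff] at hz
      have a : ‖1 - z‖ ≤ 2 := (norm_sub_le _ _).trans (by rw [norm_one]; linarith)
      have b : 0 < ‖1 - z‖ := by
        rw [norm_pos_iff, sub_ne_zero]; rintro rfl; simp at hz
      calc (1/2:ℝ) = 2 ^ (-1:ℝ) := by rw [Real.rpow_neg_one]; norm_num
        _ ≤ 2 ^ (-2*q) := Real.rpow_le_rpow_of_exponent_le (by norm_num) (by linarith)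
        _ ≤ _ := Real.rpow_le_rpow_of_nonpos b a (by linarith)
    have := le_Wf' F z hF2
    have hre := re_lt_of_ball hz
    have hp : 0 ≤ (1 - z.re) ^ (-(5:ℝ)/4) := Real.rpow_nonneg (by linarith) _
    show ‖F z‖ * _ ≤ _
    nlinarith
  rw [p] at this
  exact absurd this (not_le.2 (ENNReal.mul_lt_top (by simp) hC))

def pt (x θ : ℝ) : ℂ := (x:ℂ) + (θ:ℂ) * I
def LH : Set ℂ := {z | z.re < 0}

lemma pt_re (x θ : ℝ) : (pt x θ).re = x := by simp [pt]
lemma pt_im (x θ : ℝ) : (pt x θ).im = θ := by simp [pt]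
lemma LH_open : IsOpen LH := isOpen_lt continuous_re continuous_const
lemma pt_mem {x : ℝ} (hx : x < 0) (θ : ℝ) : pt x θ ∈ LH := by simpa [LH, pt_re] using hx

lemma pt_cont : Continuous (fun p : ℝ × ℝ => pt p.1 p.2) := by unfold pt; fun_prop

lemma pt_contθ (x : ℝ) : Continuous (fun θ => pt x θ) := by unfold pt; fun_prop

lemma slice_cont {G : ℂ → ℝ} (hG : ContinuousOn G LH) {x : ℝ} (hx : x < 0) :
    Continuous (fun θ => G (pt x θ)) :=
  hG.comp_continuous (pt_contθ x) (fun θ => pt_mem hx θ)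

lemma pt_dx (x θ : ℝ) : HasDerivAt (fun x => pt x θ) 1 x := by
  unfold pt
  exact (ofRealCLM.hasDerivAt (x := x)).add_const _

lemma pt_dθ (x θ : ℝ) : HasDerivAt (fun θ => pt x θ) I θ := by
  unfold pt
  simpa using ((ofRealCLM.hasDerivAt (x := θ)).mul_const I).const_add (x:ℂ)

lemma param_deriv {G G' : ℂ → ℝ} (hG : ContinuousOn G LH) (hG' : ContinuousOn G' LH)
    (hd : ∀ x θ : ℝ, x < 0 → HasDerivAt (fun x => G (pt x θ)) (G' (pt x θ)) x) {a b : ℝ} {τ : ℝ} (hτ : τ < 0) :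
    HasDerivAt (fun x => ∫ θ in a..b, G (pt x θ)) (∫ θ in a..b, G' (pt τ θ)) τ := by
  have hK : IsCompact ((fun p : ℝ × ℝ => pt p.1 p.2) '' (Icc (2*τ) (τ/2) ×ˢ uIcc a b)) :=
    (isCompact_Icc.prod isCompact_uIcc).image pt_cont
  obtain ⟨B, hB⟩ := hK.exists_bound_of_continuousOn (f := G') (hG'.mono (by
    rintro _ ⟨p, hp, rfl⟩
    exact pt_mem (by linarith [hp.1.2]) _))
  refine (intervalIntegral.hasDerivAt_integral_of_dominated_loc_of_deriv_le (s := Icc (2*τ) (τ/2))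
    (F := fun x θ => G (pt x θ)) (F' := fun x θ => G' (pt x θ)) (μ := volume)
    (bound := fun _ => B) (Icc_mem_nhds (by linarith) (by linarith)) ?_ ?_ ?_ ?_ ?_ ?_).2
  · filter_upwards [Iio_mem_nhds hτ] with x hx
    exact (slice_cont hG hx).aestronglyMeasurable
  · exact (slice_cont hG hτ).intervalIntegrable _ _
  · exact (slice_cont hG' hτ).aestronglyMeasurable
  · refine Eventually.of_forall fun t ht x hx => ?_
    exact hB _ ⟨(x,t), ⟨hx, uIoc_subset_uIcc ht⟩, rfl⟩
  · exact intervalIntegrable_const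
  · exact Eventually.of_forall fun t ht x hx => hd x t (by linarith [hx.2])

section
variable {h : ℂ → ℂ}

lemma dW (hh : DifferentiableOn ℂ h LH) {x : ℝ} (θ : ℝ) (hx : x < 0) :
    HasDerivAt (fun x => Wf h (pt x θ)) (D1 h 1 (pt x θ)) x := by
  obtain ⟨L, hL, hv⟩ := Wf_fd (hh.differentiableAt (LH_open.mem_nhds (pt_mem hx θ)))
  rw [← hv 1]
  exact hL.comp_hasDerivAt x (pt_dx x θ)

lemma dD (hh : DifferentiableOn ℂ h LH) {x : ℝ} (θ : ℝ) (hx : x < 0) :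
    HasDerivAt (fun x => D1 h 1 (pt x θ)) (D2 h 1 (pt x θ)) x := by
  have m := LH_open.mem_nhds (pt_mem hx θ)
  obtain ⟨L, hL, hv⟩ := D1_fd (hh.differentiableAt m) ((hh.deriv LH_open).differentiableAt m) 1
  rw [← hv]
  exact hL.comp_hasDerivAt x (pt_dx x θ)

lemma dDI (hh : DifferentiableOn ℂ h LH) {x : ℝ} (θ : ℝ) (hx : x < 0) :
    HasDerivAt (fun θ => D1 h I (pt x θ)) (D2 h I (pt x θ)) θ := by
  have m := LH_open.mem_nhds (pt_mem hx θ)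
  obtain ⟨L, hL, hv⟩ := D1_fd (hh.differentiableAt m) ((hh.deriv LH_open).differentiableAt m) I
  rw [← hv]
  exact hL.comp_hasDerivAt θ (pt_dθ x θ)

lemma cW (hh : DifferentiableOn ℂ h LH) : ContinuousOn (Wf h) LH :=
  (Wf_contDiffOn LH_open hh).continuousOn

lemma cD1 (hh : DifferentiableOn ℂ h LH) (v : ℂ) : ContinuousOn (D1 h v) LH := by
  have c1 := hh.continuousOn
  have c2 := (hh.deriv LH_open).continuousOn
  unfold D1
  refine ContinuousOn.div (c1.inner (𝕜 := ℝ) (c2.mul continuousOn_const)) ?_ ?_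
  · exact (continuousOn_const.add (c1.norm.pow 2)).sqrt
  · intro z hz; exact (Real.sqrt_pos.2 (sqpos _)).ne'

lemma cD2 (hh : DifferentiableOn ℂ h LH) (v : ℂ) : ContinuousOn (D2 h v) LH := by
  have c1 := hh.continuousOn
  have c2 := (hh.deriv LH_open).continuousOn
  have c3 := ((hh.deriv LH_open).deriv LH_open).continuousOn
  have c4 : ContinuousOn (fun z => √(1 + ‖h z‖^2)) LH := (continuousOn_const.add (c1.norm.pow 2)).sqrt
  unfold D2
  refine ContinuousOn.sub (ContinuousOn.div ?_ c4 ?_) (ContinuousOn.div ?_ (c4.pow 3) ?_)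
  · exact ((c2.mul continuousOn_const).norm.pow 2).add
      (c1.inner (𝕜 := ℝ) ((c3.mul continuousOn_const).mul continuousOn_const))
  · intro z hz; exact (Real.sqrt_pos.2 (sqpos _)).ne'
  · exact (c1.inner (𝕜 := ℝ) (c2.mul continuousOn_const)).pow 2
  · intro z hz; exact pow_ne_zero 3 (Real.sqrt_pos.2 (sqpos _)).ne'

lemma cLp (hh : DifferentiableOn ℂ h LH) : ContinuousOn (LpW h) LH := by
  have : LpW h = fun z => D2 h 1 z + D2 h I z := by ext z; rw [D_sum]
  rw [this]
  exact (cD2 hh 1).add (cD2 hh I)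

lemma int_D2 (hh : DifferentiableOn ℂ h LH) (hp : ∀ z, h (z + 2*π*I) = h z) {x : ℝ} (hx : x < 0) :
    ∫ θ in (-π)..π, D2 h 1 (pt x θ) = ∫ θ in (-π)..π, LpW h (pt x θ) := by
  have hd : ∀ z, deriv h (z + 2*π*I) = deriv h z := by
    intro z
    rw [← deriv_comp_add_const]
    congr 1; ext z; exact hp z
  have e : pt x π = pt x (-π) + 2*π*I := by unfold pt; push_cast; ring
  have h0 : ∫ θ in (-π)..π, D2 h I (pt x θ) = 0 := by
    rw [intervalIntegral.integral_eq_sub_of_hasDerivAt (fun θ _ => dDI hh θ hx)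
      ((slice_cont (cD2 hh I) hx).intervalIntegrable _ _)]
    rw [e]; unfold D1; rw [hp, hd, sub_self]
  have : ∀ θ, LpW h (pt x θ) = D2 h 1 (pt x θ) + D2 h I (pt x θ) := fun θ => (D_sum _ _).symm
  simp_rw [this]
  rw [intervalIntegral.integral_add ((slice_cont (cD2 hh 1) hx).intervalIntegrable _ _)
    ((slice_cont (cD2 hh I) hx).intervalIntegrable _ _), h0, add_zero]

lemma m_bound (hh : DifferentiableOn ℂ h LH) (hp : ∀ z, h (z + 2*π*I) = h z) :
    ∃ A : ℝ, ∀ τ : ℝ, -1 ≤ τ → τ < 0 → ∀ C : ℝ, 0 ≤ C →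
      ∫⁻ σ in Ioc (-1) τ, ∫⁻ θ in Ioc (-π) π, ENNReal.ofReal (-σ * LpW h (pt σ θ)) ≤ ENNReal.ofReal C →
      ∫ θ in (-π)..π, Wf h (pt τ θ) ≤ A + C := by
  set m : ℝ → ℝ := fun x => ∫ θ in (-π)..π, Wf h (pt x θ) with hm
  set m1 : ℝ → ℝ := fun x => ∫ θ in (-π)..π, D1 h 1 (pt x θ) with hm1
  set m2 : ℝ → ℝ := fun x => ∫ θ in (-π)..π, LpW h (pt x θ) with hm2
  have d1 : ∀ x, x < 0 → HasDerivAt m (m1 x) x := fun x hx =>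
    param_deriv (cW hh) (cD1 hh 1) (fun x θ hx => dW hh θ hx) hx
  have d2 : ∀ x, x < 0 → HasDerivAt m1 (m2 x) x := fun x hx => by
    rw [hm2]; simp only
    rw [← int_D2 hh hp hx]
    exact param_deriv (cD1 hh 1) (cD2 hh 1) (fun x θ hx => dD hh θ hx) hx
  have hpi : -π ≤ π := by linarith [Real.pi_pos]
  have m2nn : ∀ x, 0 ≤ m2 x := fun x => intervalIntegral.integral_nonneg hpi (fun θ _ => Lp_nonneg _ _)
  have mono : MonotoneOn m1 (Iio 0) := by
    apply monotoneOn_of_deriv_nonneg (convex_Iio 0)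
    · exact fun x hx => (d2 x hx).continuousAt.continuousWithinAt
    · intro x hx; rw [interior_Iio] at hx; exact (d2 x hx).differentiableAt.differentiableWithinAt
    · intro x hx; rw [interior_Iio] at hx; rw [(d2 x hx).deriv]; exact m2nn x
  refine ⟨m (-1) + m1 (-1) + |m1 (-1)|, fun τ h1 h0 C hC hle => ?_⟩
  set Φ : ℝ → ℝ := fun x => m x - x * m1 x with hΦ
  have dΦ : ∀ x, x < 0 → HasDerivAt Φ (-x * m2 x) x := fun x hx => by
    have := (d1 x hx).sub ((hasDerivAt_id x).mul (d2 x hx))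
    refine this.congr_deriv ?_
    simp
  have hint : IntegrableOn (fun x => -x * m2 x) (Ioc (-1) τ) := by
    apply intervalIntegral.integrableOn_deriv_of_nonneg (g := Φ)
    · intro x hx; exact (dΦ x (by linarith [hx.2])).continuousAt.continuousWithinAt
    · intro x hx; exact dΦ x (by linarith [hx.2])
    · intro x hx; exact mul_nonneg (by linarith [hx.2]) (m2nn x)
  have ftc : ∫ x in (-1)..τ, -x * m2 x = Φ τ - Φ (-1) := by
    apply intervalIntegral.integral_eq_sub_of_hasDerivAt
    · intro x hx; rw [uIcc_of_le h1] at hx; exact dΦ x (by linarith [hx.2])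
    · rw [intervalIntegrable_iff_integrableOn_Ioc_of_le h1]; exact hint
  have hle2 : ∫ x in (-1)..τ, -x * m2 x ≤ C := by
    rw [intervalIntegral.integral_of_le h1, ← ENNReal.ofReal_le_ofReal_iff hC,
      ofReal_integral_eq_lintegral_ofReal hint]
    · refine le_trans (le_of_eq ?_) hle
      apply setLIntegral_congr_fun measurableSet_Ioc
      intro σ hσ
      have hσ0 : σ < 0 := by linarith [hσ.2]
      simp only
      rw [hm2]; simp only
      rw [← intervalIntegral.integral_const_mul, intervalIntegral.integral_of_le hpi,
        ofReal_integral_eq_lintegral_ofReal]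
      · exact (((slice_cont (cLp hh) hσ0).intervalIntegrable (-π) π).const_mul (-σ)).1
      · exact Eventually.of_forall fun θ => mul_nonneg (by linarith) (Lp_nonneg _ _)
    · filter_upwards [ae_restrict_mem measurableSet_Ioc] with x hx
      exact mul_nonneg (by linarith [hx.2]) (m2nn x)
  have hm1' : m1 (-1) ≤ m1 τ := mono (by simp) h0 h1
  have e1 : Φ τ = m τ - τ * m1 τ := rfl
  have e2 : Φ (-1) = m (-1) - (-1) * m1 (-1) := rfl
  have e3 : τ * m1 τ ≤ τ * m1 (-1) := mul_le_mul_of_nonpos_left hm1' h0.le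
  have e4 : τ * m1 (-1) ≤ |m1 (-1)| := by
    calc τ * m1 (-1) ≤ |τ * m1 (-1)| := le_abs_self _
      _ = |τ| * |m1 (-1)| := abs_mul _ _
      _ ≤ 1 * |m1 (-1)| := by gcongr; rw [abs_le]; constructor <;> linarith
      _ = _ := one_mul _
  show m τ ≤ _
  linarith
end

lemma dint_eq {g : ℂ → ℝ} (hg : ContinuousOn g LH) {τ : ℝ} (hτ : τ < 0) :
    ∫⁻ σ in Ioc (-1) τ, ∫⁻ θ in Ioc (-π) π, ENNReal.ofReal (g (pt σ θ)) =
      ∫⁻ z in {z : ℂ | z.re ∈ Ioc (-1) τ ∧ z.im ∈ Ioc (-π) π}, ENNReal.ofReal (g z) := by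
  have hm : AEMeasurable (fun p : ℝ × ℝ => ENNReal.ofReal (g (pt p.1 p.2)))
      ((volume.restrict (Ioc (-1) τ)).prod (volume.restrict (Ioc (-π) π))) := by
    rw [Measure.prod_restrict]
    apply AEMeasurable.ennreal_ofReal
    apply ContinuousOn.aemeasurable _ (measurableSet_Ioc.prod measurableSet_Ioc)
    exact hg.comp pt_cont.continuousOn (fun p hp => pt_mem (by linarith [hp.1.2]) _)
  have e := lintegral_prod _ hm
  simp only at e
  rw [← e, Measure.prod_restrict]
  have := (Complex.volume_preserving_equiv_real_prod.symm).setLIntegral_comp_preimage_emb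
    Complex.measurableEquivRealProd.symm.measurableEmbedding (fun z => ENNReal.ofReal (g z))
    {z : ℂ | z.re ∈ Ioc (-1) τ ∧ z.im ∈ Ioc (-π) π}
  rw [← this]
  have e2 : ∀ p : ℝ × ℝ, Complex.measurableEquivRealProd.symm p = pt p.1 p.2 := by
    intro p
    apply Complex.ext <;> simp [pt]
  simp_rw [e2]
  congr 1

lemma det_mul' (c : ℂ) : ((ContinuousLinearMap.toSpanSingleton ℂ c).restrictScalars ℝ).det = ‖c‖^2 := by
  simp [ContinuousLinearMap.det, LinearMap.det_restrictScalars,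
      Algebra.norm_complex_eq, Complex.normSq_eq_norm_sq]

lemma exp_lt1 {x : ℝ} (h : x < 0) : Real.exp x < 1 := by
  rw [← Real.exp_zero]; exact Real.exp_lt_exp.2 h

lemma exp_mem {z : ℂ} (hz : z ∈ LH) : exp z ∈ ball (0:ℂ) 1 := by
  rw [mem_ball_zero_iff, norm_exp]
  exact exp_lt1 hz

lemma h_diff {f : ℂ → ℂ} (hf : DifferentiableOn ℂ f (ball (0:ℂ) 1)) :
    DifferentiableOn ℂ (fun z => f (exp z)) LH :=
  hf.comp differentiable_exp.differentiableOn (fun z hz => exp_mem hz)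

lemma LpW_exp {f : ℂ → ℂ} (hf : DifferentiableOn ℂ f (ball (0:ℂ) 1)) {z : ℂ} (hz : z ∈ LH) :
    LpW (fun z => f (exp z)) z = ‖exp z‖^2 * LpW f (exp z) := by
  have h1 := (hf.differentiableAt (isOpen_ball.mem_nhds (exp_mem hz))).hasDerivAt
  have h2 := (h1.comp z (hasDerivAt_exp z)).deriv
  have h3 : deriv (fun z => f (exp z)) z = deriv f (exp z) * exp z := h2
  unfold LpW
  rw [h3, norm_mul]
  ring

lemma exp_ineq {σ : ℝ} (h1 : -1 ≤ σ) (h0 : σ ≤ 0) : -σ ≤ 3/2 * (1 - Real.exp σ ^ 2) := by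
  have e : Real.exp σ ^ 2 = Real.exp (2*σ) := by rw [← Real.exp_nat_mul]; simp
  rw [e]
  have h := Real.add_one_le_exp (-(2*σ))
  have hp := Real.exp_pos (2*σ)
  have hm : Real.exp (2*σ) * Real.exp (-(2*σ)) = 1 := by rw [← Real.exp_add]; simp
  have h5 : Real.exp (2*σ) * (-(2*σ) + 1) ≤ 1 :=
    (mul_le_mul_of_nonneg_left h hp.le).trans hm.le
  by_contra hc
  push Not at hc
  -- exp > 1 + 2σ/3
  have h6 : (1 + 2*σ/3) < Real.exp (2*σ) := by linarith
  have h7 : (1 + 2*σ/3) * (-(2*σ) + 1) < 1 := lt_of_lt_of_le (by gcongr; linarith) h5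
  nlinarith

lemma boundS {f : ℂ → ℂ} (hf : DifferentiableOn ℂ f (ball (0:ℂ) 1)) {C : ℝ≥0∞}
    (hC : ∀ s : ℝ, 0 < s → s < 1 → ∫⁻ z in ball (0:ℂ) s, ENNReal.ofReal ((1 - ‖z‖^2) * LpW f z) ≤ C)
    {τ : ℝ} (hτ : τ < 0) :
    ∫⁻ σ in Ioc (-1) τ, ∫⁻ θ in Ioc (-π) π, ENNReal.ofReal (-σ * LpW (fun z => f (exp z)) (pt σ θ)) ≤
      ENNReal.ofReal (3/2) * C := by
  set S := {z : ℂ | z.re ∈ Ioc (-1) τ ∧ z.im ∈ Ioc (-π) π} with hS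
  have hSm : MeasurableSet S :=
    (measurable_re measurableSet_Ioc).inter (measurable_im measurableSet_Ioc)
  have hSL : ∀ z ∈ S, z ∈ LH := fun z hz => lt_of_le_of_lt hz.1.2 hτ
  have e := dint_eq (g := fun z => -z.re * LpW (fun z => f (exp z)) z)
    (continuous_re.neg.continuousOn.mul (cLp (h_diff hf))) hτ
  simp only [pt_re] at e
  rw [e]
  have cv := lintegral_image_eq_lintegral_abs_det_fderiv_mul volume hSm (f := exp)
    (f' := fun z => (ContinuousLinearMap.toSpanSingleton ℂ (exp z)).restrictScalars ℝ)
    (fun z hz => ((hasDerivAt_exp z).hasFDerivAt.restrictScalars ℝ).hasFDerivWithinAt)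
    (fun x hx y hy hxy => exp_inj_of_neg_pi_lt_of_le_pi hx.2.1 hx.2.2 hy.2.1 hy.2.2 hxy)
    (fun z => ENNReal.ofReal ((1 - ‖z‖^2) * LpW f z))
  set s := (1 + Real.exp τ)/2
  have het : Real.exp τ < 1 := exp_lt1 hτ
  have hsub : exp '' S ⊆ ball (0:ℂ) s := by
    rintro _ ⟨z, hz, rfl⟩
    rw [mem_ball_zero_iff, norm_exp]
    have : Real.exp z.re ≤ Real.exp τ := Real.exp_le_exp.2 hz.1.2
    simp only [s]; linarith
  have hfin := (lintegral_mono_set hsub).trans (hC s (by positivity) (by simp only [s]; linarith))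
  rw [cv] at hfin
  refine le_trans ?_ (mul_le_mul_right hfin (ENNReal.ofReal (3/2)))
  rw [← lintegral_const_mul' _ _ (by simp)]
  apply setLIntegral_mono' hSm
  intro z hz
  rw [det_mul', LpW_exp hf (hSL z hz), ← ENNReal.ofReal_mul (abs_nonneg _), ← ENNReal.ofReal_mul (by norm_num),
    abs_of_nonneg (by positivity)]
  apply ENNReal.ofReal_le_ofReal
  have h1 := exp_ineq hz.1.1.le (hz.1.2.trans hτ.le)
  rw [← norm_exp] at h1
  have h2 : 0 ≤ ‖exp z‖^2 * LpW f (exp z) := mul_nonneg (by positivity) (Lp_nonneg _ _)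
  calc _ ≤ (3/2 * (1 - ‖exp z‖^2)) * (‖exp z‖^2 * LpW f (exp z)) := mul_le_mul_of_nonneg_right h1 h2
    _ = _ := by ring

lemma mem_H1 {f : ℂ → ℂ} (hf : DifferentiableOn ℂ f (ball (0:ℂ) 1)) {C : ℝ≥0∞} (hC' : C < ⊤)
    (hC : ∀ s : ℝ, 0 < s → s < 1 → ∫⁻ z in ball (0:ℂ) s, ENNReal.ofReal ((1 - ‖z‖^2) * LpW f z) ≤ C) :
    MemH1Disc f := by
  refine ⟨hf, ?_⟩
  have hh := h_diff hf
  have hp : ∀ z, (fun z => f (exp z)) (z + 2*π*I) = (fun z => f (exp z)) z := by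
    intro z; simp only; rw [exp_periodic z]
  obtain ⟨A, hA⟩ := m_bound hh hp
  set D := (ENNReal.ofReal (3/2) * C).toReal with hD
  have hDt : ENNReal.ofReal (3/2) * C ≠ ⊤ := (ENNReal.mul_lt_top (by simp) hC').ne
  obtain ⟨B, hB⟩ := (isCompact_closedBall (0:ℂ) (Real.exp (-1))).exists_bound_of_continuousOn (f := f)
    (hf.continuousOn.mono (closedBall_subset_ball (exp_lt1 (by norm_num))))
  have hπ := Real.pi_pos
  refine ⟨max (A + D + 2*π) (B * (2*π)), fun r h0 h1 => ?_⟩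
  have hcont : Continuous (fun θ : ℝ => ‖f ((r:ℂ) * exp ((θ:ℂ) * I))‖) := by
    refine (hf.continuousOn.comp_continuous (by fun_prop) (fun θ => ?_)).norm
    rw [mem_ball_zero_iff, norm_mul, norm_exp_ofReal_mul_I, mul_one, norm_real, Real.norm_eq_abs, abs_of_pos h0]
    exact h1
  rcases le_or_gt r (Real.exp (-1)) with hr | hr
  · apply le_max_of_le_right
    have : ∫ θ in (0:ℝ)..(2 * Real.pi), ‖f ((r : ℂ) * exp ((θ : ℂ) * I))‖ ≤ ∫ θ in (0:ℝ)..(2 * Real.pi), B := by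
      apply intervalIntegral.integral_mono_on (by positivity) (hcont.intervalIntegrable _ _) intervalIntegrable_const
      intro θ _
      apply hB
      rw [mem_closedBall_zero_iff, norm_mul, norm_exp_ofReal_mul_I, mul_one, norm_real, Real.norm_eq_abs, abs_of_pos h0]
      exact hr
    refine this.trans (le_of_eq ?_)
    rw [intervalIntegral.integral_const]; simp; ring
  · apply le_max_of_le_left
    set τ := Real.log r
    have hτ0 : τ < 0 := Real.log_neg h0 h1
    have hτ1 : -1 ≤ τ := by rw [Real.le_log_iff_exp_le h0]; exact hr.le
    have hper : Function.Periodic (fun θ : ℝ => ‖f ((r:ℂ) * exp ((θ:ℂ) * I))‖) (2*π) := by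
      intro θ
      have : exp (((θ + 2*π : ℝ) : ℂ) * I) = exp ((θ:ℂ) * I) := by
        rw [← exp_periodic ((θ:ℂ) * I)]; congr 1; push_cast; ring
      simp only [this]
    have e := hper.intervalIntegral_add_eq 0 (-π)
    rw [zero_add, show -π + 2*π = π by ring] at e
    rw [e]
    have b := hA τ hτ1 hτ0 D ENNReal.toReal_nonneg (by
      rw [hD, ENNReal.ofReal_toReal hDt]; exact boundS hf hC hτ0)
    have hpt : ∀ θ : ℝ, exp (pt τ θ) = (r:ℂ) * exp ((θ:ℂ) * I) := by
      intro θ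
      unfold pt
      rw [exp_add, ← ofReal_exp, Real.exp_log h0]
    have : ∫ θ in (-π)..π, ‖f ((r : ℂ) * exp ((θ : ℂ) * I))‖ ≤
        ∫ θ in (-π)..π, (Wf (fun z => f (exp z)) (pt τ θ) + 1) := by
      apply intervalIntegral.integral_mono_on (by linarith) (hcont.intervalIntegrable _ _)
      · exact ((slice_cont (cW hh) hτ0).add continuous_const).intervalIntegrable _ _
      · intro θ _
        have := le_Wf (fun z => f (exp z)) (pt τ θ)
        simp only [hpt] at this
        exact this
    rw [intervalIntegral.integral_add ((slice_cont (cW hh) hτ0).intervalIntegrable _ _) intervalIntegrable_const,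
      intervalIntegral.integral_const] at this
    simp only [smul_eq_mul, mul_one] at this
    linarith

/-- For `1/4 < q < 1/2` and `F(z) = (1-z)^{-2q}`,
`∫_𝔻 |F(z)| (1 - Re z)^{-5/4} dA(z) = ∞`; consequently `F ∉ H^1_{u₀}(𝔻)` although
`F ∈ H^1(𝔻)`, so `H^1_{u₀}(𝔻) ⊊ H^1(𝔻)`. -/
theorem stmt6 (q : ℝ) (hq0 : 1/4 < q) (hq1 : q < 1/2) (ρ : ℂ → ℝ)
    (hρcont : ContinuousOn ρ (closedBall (0:ℂ) 1))
    (hρharm : HarmonicOn ρ (ball (0:ℂ) 1))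
    (hρbd : ∀ z ∈ sphere (0:ℂ) 1, ρ z = -(1 - z.re) ^ (3/4 : ℝ))
    (ν : Measure ℂ)
    (hν : IsRieszMeasure (fun z => -(1 - z.re) ^ (3/4 : ℝ) - ρ z) (ball (0:ℂ) 1) ν)
    (μfam : ℝ → Measure ℂ)
    (hμ : ∀ r : ℝ, r < 0 →
      IsMAMeasure (fun z => -(1 - z.re) ^ (3/4 : ℝ) - ρ z) (ball (0:ℂ) 1) ν r (μfam r)) :
    (∫⁻ z in ball (0:ℂ) 1,
        ENNReal.ofReal (‖(1 - z) ^ (-2 * (q:ℂ))‖ * (1 - z.re) ^ (-(5:ℝ)/4)) = ⊤) ∧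
    MemH1Disc (fun z => (1 - z) ^ (-2 * (q:ℂ))) ∧
    ¬ MemPS 1 (ball (0:ℂ) 1) μfam (fun z => (1 - z) ^ (-2 * (q:ℂ))) ∧
    {f : ℂ → ℂ | MemPS 1 (ball (0:ℂ) 1) μfam f} ⊂ {f : ℂ → ℂ | MemH1Disc f} := by
  have H : Hyp ρ ν μfam := ⟨hρcont, hρharm, hρbd, hν, hμ⟩
  have p2 := part2 q hq0 hq1
  have p3 := H.notmem hq0 hq1
  refine ⟨part1 q hq0 hq1, p2, p3, ?_⟩
  have hsub : {f : ℂ → ℂ | MemPS 1 (ball (0:ℂ) 1) μfam f} ⊆ {f : ℂ → ℂ | MemH1Disc f} := by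
    intro f hf
    obtain ⟨C, hC, hb⟩ := H.boundA hf
    exact mem_H1 hf.1 hC hb
  rw [Set.ssubset_iff_of_subset hsub]
  exact ⟨_, p2, p3⟩


end
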